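/- arXiv:1605.06546 — 3 statements merged into one kernel-verified Lean document; each statement's English description precedes it below -/
import Mathlib

section
/- Let r ≥ 3 and let E ⊆ GF(2)^r \ {0} be fano-free (no 3-dimensional subspace W satisfies W \ {0} ⊆ E) with |E| > (5/8)·2^r. Then there exists a linear hyperplane H of GF(2)^r such that E ∩ H is triangle-free, i.e., there are no x, y ∈ E ∩ H with x ≠ y and x + y ∈ E ∩ H. Moreover |E ∩ H| > (1/4)·2^{r−1}. -/
/-!
For `A ⊆ V = GF(2)^r` and a functional `f`, the Fourier coefficient of `A` at `f` is
`|A| - 2 |A \ ker f|`. If `|A \ ker f| ≤ c` for all `f ≠ 0`, then every nontrivial coefficient is at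
least `|A| - 2 c`, so comparing the second and third moments bounds the number of triangles of `A`
from below. This is used twice.

* If `|E \ ker f| ≤ 3/8 |V|` for all `f ≠ 0`, some `x ∈ E` has a triangle link of more than
  `11/32 |V|` elements. As `E` is Fano-free, this link is sum-free.
* A sum-free set with more than `|V| / 3` elements therefore has `|A \ ker f| > |V| / 4` for some
  `f ≠ 0`, and then it must avoid `ker f` altogether, since a translation by an element of
  `A ∩ ker f` would move `A \ ker f` off itself inside the complement of `ker f`.

Let `f` be the functional of the second step for the link of `x`. It vanishes at `x`, so `x` moves
`E ∩ ker f` off itself, which gives `|E| ≤ |V| / 4 + 3/8 |V|`, a contradiction. Hence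
`|E \ ker f| > 3/8 |V|` for some `f ≠ 0`. Now `E` misses less than a quarter of the complement of
`ker f`, so a triangle of `E` in `ker f` could be completed to a Fano plane in `E` by a point
outside `ker f`.
-/

open Finset

section Definitions

variable {V : Type*} [AddCommGroup V]

/-- A set of vectors of a binary space is Fano-free if it does not contain all the nonzero vectors
of a three-dimensional subspace, that is, a copy of the projective plane `PG(2, 2)`. -/
def IsFanoFree [Module (ZMod 2) V] (E : Set V) : Prop :=
  ¬ ∃ W : Submodule (ZMod 2) V, Module.finrank (ZMod 2) W = 3 ∧ ∀ x ∈ W, x ≠ 0 → x ∈ E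

/-- A set of nonzero vectors of a binary space is triangle-free if it contains no projective line
`{x, y, x + y}`. -/
def IsTriangleFree (E : Set V) : Prop :=
  ¬ ∃ x y, x ∈ E ∧ y ∈ E ∧ x ≠ y ∧ x + y ∈ E

/-- The link of `x` in `A`: the points `y` of `A` that span with `x` a triangle whose third point
`x + y` is again in `A`. -/
def triangleLink [DecidableEq V] (A : Finset V) (x : V) : Finset V :=
  {y ∈ A | x + y ∈ A}

/-- The nontrivial real character of the group with two elements. -/
noncomputable def parityChar : AddChar (ZMod 2) ℝ :=
  AddChar.zmodChar 2 (by norm_num : (-1 : ℝ) ^ 2 = 1)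

/-- The unnormalised Fourier coefficient of the indicator function of `A`. The characters of a
binary space are indexed by its linear functionals. -/
noncomputable def characterSum [Module (ZMod 2) V] (A : Finset V) (f : Module.Dual (ZMod 2) V) :
    ℝ :=
  ∑ v ∈ A, parityChar (f v)

end Definitions

section Translates

variable {G : Type*} [AddGroup G]

lemma two_mul_card_le_of_translate_disjoint {A B : Finset G} {x : G} (hAB : A ⊆ B)
    (hB : ∀ y ∈ A, x + y ∈ B) (hA : ∀ y ∈ A, x + y ∉ A) : 2 * #A ≤ #B := by
  classical
  have hdisj : Disjoint A (A.image (x + ·)) := by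
    simpa only [disjoint_right, forall_mem_image] using hA
  calc 2 * #A = #(A ∪ A.image (x + ·)) := by
        rw [card_union_of_disjoint hdisj, card_image_of_injective _ (add_right_injective x),
          two_mul]
    _ ≤ #B := card_le_card (union_subset hAB (image_subset_iff.2 hB))

lemma exists_forall_add_mem_of_card_mul_lt [DecidableEq G] {P S A : Finset G}
    (hPS : ∀ p ∈ P, ∀ z ∈ S, p + z ∈ S)
    (hcard : #P * #(S \ A) < #S) : ∃ z ∈ S, ∀ p ∈ P, p + z ∈ A := by
  by_contra! hmiss
  have hcover : S ⊆ P.biUnion fun p => (S \ A).image (-p + ·) := by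
    intro z hz
    obtain ⟨p, hp, hpz⟩ := hmiss z hz
    exact mem_biUnion.2 ⟨p, hp, mem_image.2
      ⟨p + z, mem_sdiff.2 ⟨hPS p hp z hz, hpz⟩, neg_add_cancel_left p z⟩⟩
  exact hcard.not_ge ((card_le_card hcover).trans
    (card_biUnion_le_card_mul _ _ _ fun _ _ => card_image_le))

end Translates

lemma exists_submodule_finrank_eq_of_forall_sum_smul_mem {K V ι : Type*} [DivisionRing K]
    [AddCommGroup V] [Module K V] [Fintype ι] {E : Set V} (h0 : 0 ∉ E) {v : ι → V}
    (hv : ∀ g : ι → K, g ≠ 0 → ∑ i, g i • v i ∈ E) :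
    ∃ W : Submodule K V, Module.finrank K W = Fintype.card ι ∧ ∀ x ∈ W, x ≠ 0 → x ∈ E := by
  have hli : LinearIndependent K v := by
    refine Fintype.linearIndependent_iff.2 fun g hg => congrFun ?_
    by_contra hg0
    exact h0 (hg ▸ hv g hg0)
  refine ⟨Submodule.span K (Set.range v), finrank_span_eq_card hli, fun x hx hx0 => ?_⟩
  obtain ⟨g, rfl⟩ := (Submodule.mem_span_range_iff_exists_fun K).1 hx
  refine hv g ?_
  rintro rfl
  simp at hx0

lemma eq_zero_or_eq_one_of_zmod_two (a : ZMod 2) : a = 0 ∨ a = 1 := by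
  revert a
  decide

lemma card_filter_eq_zero_add_card_filter_eq_one {α : Type*} (A : Finset α) (f : α → ZMod 2) :
    #{v ∈ A | f v = 0} + #{v ∈ A | f v = 1} = #A := by
  calc #{v ∈ A | f v = 0} + #{v ∈ A | f v = 1} = ∑ c, #{v ∈ A | f v = c} :=
        (Fin.sum_univ_two fun c : ZMod 2 => #{v ∈ A | f v = c}).symm
    _ = #A := (card_eq_sum_card_fiberwise fun v _ => mem_univ (f v)).symm

section Binary

variable {V : Type*} [AddCommGroup V] [Module (ZMod 2) V]

lemma add_add_cancel_of_zmod_two (x y : V) : x + (x + y) = y := by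
  rw [← add_assoc, ZModModule.add_self, zero_add]

lemma IsFanoFree.add_add_notMem {E : Set V} (hE : IsFanoFree E) (h0 : 0 ∉ E) {x y z : V}
    (hx : x ∈ E) (hy : y ∈ E) (hz : z ∈ E) (hxy : x + y ∈ E) (hxz : x + z ∈ E) (hyz : y + z ∈ E) :
    x + y + z ∉ E := by
  intro hxyz
  refine hE (exists_submodule_finrank_eq_of_forall_sum_smul_mem (v := ![x, y, z]) h0 ?_)
  intro g hg
  have hg' : ¬ (g 0 = 0 ∧ g 1 = 0 ∧ g 2 = 0) := by
    simpa [funext_iff, Fin.forall_fin_succ] using hg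
  rcases eq_zero_or_eq_one_of_zmod_two (g 0) with h₀ | h₀ <;>
  rcases eq_zero_or_eq_one_of_zmod_two (g 1) with h₁ | h₁ <;>
  rcases eq_zero_or_eq_one_of_zmod_two (g 2) with h₂ | h₂ <;>
  simp_all [Fin.sum_univ_three]

lemma IsFanoFree.add_notMem_triangleLink [DecidableEq V] {E : Finset V}
    (hE : IsFanoFree (E : Set V)) (h0 : 0 ∉ E) {x y z : V} (hx : x ∈ E)
    (hy : y ∈ triangleLink E x) (hz : z ∈ triangleLink E x) : y + z ∉ triangleLink E x := by
  simp only [triangleLink, mem_filter] at hy hz ⊢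
  rintro ⟨hyz, hxyz⟩
  exact hE.add_add_notMem (mod_cast h0) hx hy.1 hz.1 hy.2 hz.2 hyz (by rwa [add_assoc])

lemma add_mem_triangleLink [DecidableEq V] {A : Finset V} {x y : V} (hy : y ∈ triangleLink A x) :
    x + y ∈ triangleLink A x := by
  simp only [triangleLink, mem_filter, add_add_cancel_of_zmod_two] at hy ⊢
  exact hy.symm

end Binary

section Functional

variable {V : Type*} [AddCommGroup V] [Module (ZMod 2) V] [Fintype V]

lemma two_mul_card_fiber_eq {f : Module.Dual (ZMod 2) V} (hf : f ≠ 0) (c : ZMod 2) :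
    2 * #{v | f v = c} = Fintype.card V := by
  have hfiber (d : ZMod 2) : #{v | f v = d} = #{v | f v = c} :=
    AddMonoidHom.card_fiber_eq_of_mem_range f (LinearMap.surjective hf d)
      (LinearMap.surjective hf c)
  rw [← card_univ, ← card_filter_eq_zero_add_card_filter_eq_one univ f, hfiber 0, hfiber 1, two_mul]

lemma two_mul_card_filter_le {f : Module.Dual (ZMod 2) V} (hf : f ≠ 0) (A : Finset V)
    (c : ZMod 2) : 2 * #{v ∈ A | f v = c} ≤ Fintype.card V := by
  rw [← two_mul_card_fiber_eq hf c]
  gcongr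
  exact subset_univ A

lemma four_mul_card_filter_le_of_add_notMem {f : Module.Dual (ZMod 2) V}
    (hf : f ≠ 0) {A : Finset V} {c : ZMod 2} {x : V} (hx : f x = 0)
    (hA : ∀ y ∈ A, f y = c → x + y ∉ A) : 4 * #{v ∈ A | f v = c} ≤ Fintype.card V := by
  have hfiber : 2 * #{v ∈ A | f v = c} ≤ #{v | f v = c} := by
    refine two_mul_card_le_of_translate_disjoint (x := x)
      (filter_subset_filter _ (subset_univ A)) ?_ ?_ <;> simp +contextual [hx, hA]
  have := two_mul_card_fiber_eq hf c
  omega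

end Functional

section Fourier

variable {V : Type*} [AddCommGroup V] [Module (ZMod 2) V]

lemma parityChar_eq (a : ZMod 2) : parityChar a = 1 - 2 * if a = 1 then 1 else 0 := by
  rcases eq_zero_or_eq_one_of_zmod_two a with rfl | rfl <;>
    norm_num [parityChar, AddChar.zmodChar_apply, ZMod.val_one]

lemma characterSum_eq (A : Finset V) (f : Module.Dual (ZMod 2) V) :
    characterSum A f = #A - 2 * #{v ∈ A | f v = 1} := by
  simp only [characterSum, parityChar_eq, sum_sub_distrib, ← mul_sum, sum_boole, sum_const,
    nsmul_eq_mul, mul_one]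

lemma characterSum_zero (A : Finset V) : characterSum A 0 = #A := by
  simp [characterSum]

variable [Fintype V]

section Moments

variable [Fintype (Module.Dual (ZMod 2) V)]

lemma sum_parityChar_dual [DecidableEq V] (v : V) :
    ∑ f : Module.Dual (ZMod 2) V, parityChar (f v) = if v = 0 then (Fintype.card V : ℝ) else 0 := by
  classical
  let evalChar : AddChar (Module.Dual (ZMod 2) V) ℝ :=
    parityChar.compAddMonoidHom (Module.Dual.eval (ZMod 2) V v).toAddMonoidHom
  have heval : evalChar = 0 ↔ v = 0 := by
    rw [AddChar.eq_zero_iff, ← Module.forall_dual_apply_eq_zero_iff (ZMod 2) v]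
    refine forall_congr' fun f => ?_
    change parityChar (f v) = 1 ↔ f v = 0
    rcases eq_zero_or_eq_one_of_zmod_two (f v) with h | h <;> norm_num [h, parityChar_eq]
  have hdual : Fintype.card (Module.Dual (ZMod 2) V) = Fintype.card V := by
    rw [Module.card_eq_pow_finrank (K := ZMod 2), Subspace.dual_finrank_eq,
      ← Module.card_eq_pow_finrank (K := ZMod 2)]
  have hsum := AddChar.sum_eq_ite evalChar
  simp only [heval, hdual] at hsum
  exact hsum

lemma sum_parityChar_mul_characterSum [DecidableEq V] (A : Finset V) (u : V) :
    ∑ f, parityChar (f u) * characterSum A f = if u ∈ A then (Fintype.card V : ℝ) else 0 := by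
  have hzero (v : V) : u + v = 0 ↔ u = v := by
    rw [← ZModModule.sub_eq_add, sub_eq_zero]
  calc ∑ f, parityChar (f u) * characterSum A f
      = ∑ v ∈ A, ∑ f : Module.Dual (ZMod 2) V, parityChar (f (u + v)) := by
        simp only [characterSum, mul_sum, map_add, AddChar.map_add_eq_mul]
        exact sum_comm
    _ = if u ∈ A then (Fintype.card V : ℝ) else 0 := by
        simp only [sum_parityChar_dual, hzero, sum_ite_eq]

lemma sum_characterSum_sq (A : Finset V) :
    ∑ f, characterSum A f ^ 2 = Fintype.card V * (#A : ℝ) := by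
  classical
  calc ∑ f, characterSum A f ^ 2 = ∑ u ∈ A, ∑ f, parityChar (f u) * characterSum A f := by
        rw [sum_comm]
        exact sum_congr rfl fun f _ => by rw [← sum_mul, sq, characterSum]
    _ = Fintype.card V * (#A : ℝ) := by
        simp only [sum_parityChar_mul_characterSum, sum_ite_mem, inter_self, sum_const,
          nsmul_eq_mul]
        ring

lemma sum_characterSum_cube [DecidableEq V] (A : Finset V) :
    ∑ f, characterSum A f ^ 3 = Fintype.card V * ∑ x ∈ A, (#(triangleLink A x) : ℝ) := by
  calc ∑ f, characterSum A f ^ 3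
      = ∑ x ∈ A, ∑ y ∈ A, ∑ f, parityChar (f (x + y)) * characterSum A f := by
        simp only [sum_comm (s := A) (t := univ), map_add, AddChar.map_add_eq_mul, ← sum_mul,
          ← mul_sum]
        exact sum_congr rfl fun f _ => by rw [pow_succ, sq, characterSum]
    _ = Fintype.card V * ∑ x ∈ A, (#(triangleLink A x) : ℝ) := by
        simp only [sum_parityChar_mul_characterSum, ← sum_filter, sum_const, nsmul_eq_mul,
          ← sum_mul, triangleLink]
        ring

end Moments

lemma card_cube_add_le_sum_card_triangleLink [DecidableEq V] {A : Finset V} {c : ℝ}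
    (hc : ∀ f : Module.Dual (ZMod 2) V, f ≠ 0 → (#{v ∈ A | f v = 1} : ℝ) ≤ c) :
    (#A : ℝ) ^ 3 + (#A - 2 * c) * (Fintype.card V * #A - #A ^ 2) ≤
      Fintype.card V * ∑ x ∈ A, (#(triangleLink A x) : ℝ) := by
  classical
  have : Finite (Module.Dual (ZMod 2) V) := Module.finite_of_finite (ZMod 2)
  have := Fintype.ofFinite (Module.Dual (ZMod 2) V)
  have hcoeff : ∀ f ∈ univ.erase 0,
      (#A - 2 * c) * characterSum A f ^ 2 ≤ characterSum A f ^ 3 := by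
    intro f hf
    have hle : #A - 2 * c ≤ characterSum A f := by
      rw [characterSum_eq]
      linarith [hc f (ne_of_mem_erase hf)]
    rw [pow_succ' _ 2]
    gcongr
  have hsum := sum_le_sum hcoeff
  rw [← mul_sum, sum_erase_eq_sub (mem_univ _), sum_erase_eq_sub (mem_univ _),
    sum_characterSum_sq, sum_characterSum_cube, characterSum_zero] at hsum
  linarith

end Fourier

section Density

variable {V : Type*} [AddCommGroup V] [Module (ZMod 2) V] [Fintype V]

lemma exists_card_mul_le_card_triangleLink [DecidableEq V] {A : Finset V} (hA : A.Nonempty)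
    {c : ℝ}
    (hc : ∀ f : Module.Dual (ZMod 2) V, f ≠ 0 → (#{v ∈ A | f v = 1} : ℝ) ≤ c) :
    ∃ x ∈ A, #A * (Fintype.card V + 2 * c) - 2 * c * Fintype.card V ≤
      (Fintype.card V : ℝ) * #(triangleLink A x) := by
  apply exists_le_of_sum_le hA
  calc ∑ _x ∈ A, (#A * (Fintype.card V + 2 * c) - 2 * c * Fintype.card V)
      = (#A : ℝ) ^ 3 + (#A - 2 * c) * (Fintype.card V * #A - #A ^ 2) := by
        rw [sum_const, nsmul_eq_mul]
        ring
    _ ≤ ∑ x ∈ A, (Fintype.card V : ℝ) * #(triangleLink A x) := by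
        rw [← mul_sum]
        exact card_cube_add_le_sum_card_triangleLink hc

lemma exists_dual_card_filter_gt_of_sumFree {A : Finset V}
    (hA : ∀ y ∈ A, ∀ z ∈ A, y + z ∉ A) (hcard : Fintype.card V < 3 * #A) :
    ∃ f : Module.Dual (ZMod 2) V, f ≠ 0 ∧ (1 / 4 : ℝ) * Fintype.card V < #{v ∈ A | f v = 1} := by
  classical
  by_contra! hsmall
  have hne : A.Nonempty := card_pos.1 (by omega)
  obtain ⟨x, hx, hlink⟩ := exists_card_mul_le_card_triangleLink hne hsmall
  have hempty : triangleLink A x = ∅ := filter_eq_empty_iff.2 fun y hy => hA x hx y hy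
  rw [hempty, card_empty, Nat.cast_zero, mul_zero] at hlink
  have hcard' : (Fintype.card V : ℝ) < 3 * #A := mod_cast hcard
  have hpos : (0 : ℝ) < Fintype.card V := mod_cast Fintype.card_pos
  nlinarith

lemma exists_dual_eq_one_of_sumFree {A : Finset V}
    (hA : ∀ y ∈ A, ∀ z ∈ A, y + z ∉ A) (hcard : Fintype.card V < 3 * #A) :
    ∃ f : Module.Dual (ZMod 2) V, f ≠ 0 ∧ ∀ z ∈ A, f z = 1 := by
  obtain ⟨f, hf, hlarge⟩ := exists_dual_card_filter_gt_of_sumFree hA hcard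
  refine ⟨f, hf, fun z hz => (eq_zero_or_eq_one_of_zmod_two (f z)).resolve_left fun hfz => ?_⟩
  have hle : 4 * (#{v ∈ A | f v = 1} : ℝ) ≤ Fintype.card V :=
    mod_cast four_mul_card_filter_le_of_add_notMem hf hfz fun y hy _ => hA z hz y hy
  linarith

variable {E : Finset V}

lemma IsFanoFree.exists_dual_triangleLink_eq_one [DecidableEq V] (hE : IsFanoFree (E : Set V))
    (h0 : 0 ∉ E) (hcard : (5 / 8 : ℝ) * Fintype.card V < #E)
    (hsmall : ∀ f : Module.Dual (ZMod 2) V, f ≠ 0 →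
      (#{v ∈ E | f v = 1} : ℝ) ≤ 3 / 8 * Fintype.card V) :
    ∃ x ∈ E, ∃ f : Module.Dual (ZMod 2) V, f ≠ 0 ∧ f x = 0 ∧ ∀ y ∈ triangleLink E x, f y = 1 := by
  have hpos : (0 : ℝ) < Fintype.card V := mod_cast Fintype.card_pos
  have hne : E.Nonempty := by
    by_contra! hempty
    simp only [hempty, card_empty, Nat.cast_zero] at hcard
    linarith
  obtain ⟨x, hx, hlink⟩ := exists_card_mul_le_card_triangleLink hne hsmall
  have hlarge : Fintype.card V < 3 * #(triangleLink E x) := by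
    suffices (11 / 32 : ℝ) * Fintype.card V < #(triangleLink E x) by
      exact_mod_cast (by linarith : (Fintype.card V : ℝ) < 3 * #(triangleLink E x))
    nlinarith
  obtain ⟨f, hf, hone⟩ := exists_dual_eq_one_of_sumFree
    (fun y hy z hz => hE.add_notMem_triangleLink h0 hx hy hz) hlarge
  obtain ⟨y, hy⟩ : (triangleLink E x).Nonempty := card_pos.1 (by omega)
  have hfx : f x = 0 := by
    simpa [map_add, hone y hy] using hone _ (add_mem_triangleLink hy)
  exact ⟨x, hx, f, hf, hfx, hone⟩

theorem IsFanoFree.exists_dual_card_filter_gt (hE : IsFanoFree (E : Set V)) (h0 : 0 ∉ E)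
    (hcard : (5 / 8 : ℝ) * Fintype.card V < #E) :
    ∃ f : Module.Dual (ZMod 2) V, f ≠ 0 ∧ (3 / 8 : ℝ) * Fintype.card V < #{v ∈ E | f v = 1} := by
  classical
  by_contra! hsmall
  obtain ⟨x, -, f, hf, hfx, hone⟩ := hE.exists_dual_triangleLink_eq_one h0 hcard hsmall
  have hker : 4 * (#{v ∈ E | f v = 0} : ℝ) ≤ Fintype.card V := by
    refine mod_cast four_mul_card_filter_le_of_add_notMem hf hfx fun y hy hfy hxy => ?_
    exact zero_ne_one (hfy.symm.trans (hone y (mem_filter.2 ⟨hy, hxy⟩)))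
  have hsplit : (#{v ∈ E | f v = 0} : ℝ) + #{v ∈ E | f v = 1} = #E :=
    mod_cast card_filter_eq_zero_add_card_filter_eq_one E f
  linarith [hsmall f hf]

theorem IsFanoFree.isTriangleFree_inter_ker (hE : IsFanoFree (E : Set V)) (h0 : 0 ∉ E)
    {f : Module.Dual (ZMod 2) V} (hf : f ≠ 0)
    (hlarge : (3 / 8 : ℝ) * Fintype.card V < #{v ∈ E | f v = 1}) :
    IsTriangleFree (E ∩ LinearMap.ker f : Set V) := by
  classical
  rintro ⟨x, y, ⟨hx, hfx⟩, ⟨hy, hfy⟩, -, hxy, -⟩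
  rw [SetLike.mem_coe, LinearMap.mem_ker] at hfx hfy
  obtain ⟨z, -, hz⟩ : ∃ z ∈ ({v | f v = 1} : Finset V), ∀ p ∈ ({0, x, y, x + y} : Finset V),
      p + z ∈ E := by
    apply exists_forall_add_mem_of_card_mul_lt
    · simp +contextual [hfx, hfy]
    · have hmissed : #(({v | f v = 1} : Finset V) \ E) + #{v ∈ E | f v = 1} = #{v | f v = 1} := by
        rw [← card_sdiff_add_card_inter {v | f v = 1} E, filter_inter, univ_inter]
      have hlarge' : 3 * Fintype.card V < 8 * #{v ∈ E | f v = 1} := by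
        exact_mod_cast (by linarith : 3 * (Fintype.card V : ℝ) < 8 * #{v ∈ E | f v = 1})
      have hhalf := two_mul_card_fiber_eq hf 1
      have hfour : #({0, x, y, x + y} : Finset V) ≤ 4 := card_le_four
      exact (Nat.mul_le_mul_right _ hfour).trans_lt (by omega)
  simp only [mem_insert, mem_singleton, forall_eq_or_imp, forall_eq, zero_add] at hz
  obtain ⟨hz, hxz, hyz, hxyz⟩ := hz
  exact hE.add_add_notMem (mod_cast h0) hx hy hz hxy hxz hyz hxyz

end Density

theorem stmt_11_general {V : Type*} [AddCommGroup V] [Module (ZMod 2) V] [Finite V] (E : Set V)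
    (h0 : 0 ∉ E) (hE : IsFanoFree E)
    (hcard : (5 / 8 : ℝ) * 2 ^ Module.finrank (ZMod 2) V < E.ncard) :
    ∃ H : Submodule (ZMod 2) V, Module.finrank (ZMod 2) H = Module.finrank (ZMod 2) V - 1 ∧
      IsTriangleFree (E ∩ H : Set V) ∧
      (1 / 4 : ℝ) * 2 ^ (Module.finrank (ZMod 2) V - 1) < (E ∩ H : Set V).ncard := by
  classical
  have := Fintype.ofFinite V
  lift E to Finset V using E.toFinite
  have hV : (Fintype.card V : ℝ) = 2 ^ Module.finrank (ZMod 2) V := by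
    exact_mod_cast Module.card_eq_pow_finrank (K := ZMod 2) (V := V)
  rw [Set.ncard_coe_finset, ← hV] at hcard
  obtain ⟨f, hf, hlarge⟩ := hE.exists_dual_card_filter_gt (mod_cast h0) hcard
  have hrank := Module.Dual.finrank_ker_add_one_of_ne_zero hf
  refine ⟨LinearMap.ker f, by omega, hE.isTriangleFree_inter_ker (mod_cast h0) hf hlarge, ?_⟩
  have hker : (E ∩ LinearMap.ker f : Set V) = ({v ∈ E | f v = 0} : Finset V) := by
    ext v
    simp
  have hsplit : (#{v ∈ E | f v = 0} : ℝ) + #{v ∈ E | f v = 1} = #E :=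
    mod_cast card_filter_eq_zero_add_card_filter_eq_one E f
  have hhalf : 2 * (#{v ∈ E | f v = 1} : ℝ) ≤ Fintype.card V :=
    mod_cast two_mul_card_filter_le hf E 1
  rw [hker, Set.ncard_coe_finset]
  rw [← hrank, pow_succ] at hV
  rw [← hrank, Nat.add_sub_cancel]
  linarith

theorem stmt_11 (r : ℕ) (hr : 3 ≤ r)
    (E : Set (Fin r → ZMod 2)) (h0 : (0 : Fin r → ZMod 2) ∉ E)
    (hfree : ¬ ∃ W : Submodule (ZMod 2) (Fin r → ZMod 2),
      Module.finrank (ZMod 2) W = 3 ∧ ∀ x ∈ W, x ≠ 0 → x ∈ E)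
    (hcard : (5/8 : ℝ) * 2^r < (E.ncard : ℝ)) :
    ∃ H : Submodule (ZMod 2) (Fin r → ZMod 2),
      Module.finrank (ZMod 2) H = r - 1 ∧
      (¬ ∃ x y, x ∈ E ∩ (H : Set (Fin r → ZMod 2)) ∧
        y ∈ E ∩ (H : Set (Fin r → ZMod 2)) ∧ x ≠ y ∧
        x + y ∈ E ∩ (H : Set (Fin r → ZMod 2))) ∧
      (1/4 : ℝ) * 2^(r-1) < ((E ∩ (H : Set (Fin r → ZMod 2))).ncard : ℝ) := by
  simpa only [Module.finrank_fin_fun, IsTriangleFree] using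
    stmt_11_general E h0 hfree (by rwa [Module.finrank_fin_fun])
end

section
/- Let n ≥ 2, r ≥ n+2, and let E ⊆ GF(2)^r \ {0} be PG(n−1,2)-free with |E| > (1 − 2/2^n − 3/2^{n+2})·2^r. Then there is an (r−n)-dimensional subspace F of GF(2)^r with E ∩ F = ∅. -/
open Module
open scoped Pointwise

/-!
Induct on `n`. By the Bose–Burton theorem, `E` contains all nonzero vectors of some
`(n-2)`-dimensional subspace `W`. The cosets of `W` contained in `E` form a sum-free subset of
`V ⧸ W`, and the bound on `|E|` gives it density more than `5 / 16`.

A sum-free set `A` of such density misses a hyperplane: extend it to a maximal sum-free set `M`, so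
that every element of `Mᶜ` is a sum of two elements of `M`. If `Mᶜ` were not a subgroup, then `M`
would contain elements `a, b, c, d` together with `a + b + c + d`, and pulling translates of `M`
back along `𝔽₂⁴ → V` would give independent sets of the Clebsch graph, which have at most `5` of
its `16` vertices.

The preimage `H` of that hyperplane meets `Eᶜ` in every coset of `W`, so at least
`|V| / 2 ^ (n-1)` points of `Eᶜ` lie in `H`. If all nonzero vectors of an `(n-1)`-dimensional
subspace of `H` were in `E`, each of its cosets off `H` would also meet `Eᶜ`, contradicting the
bound on `|E|`. Hence induction applies to `E ∩ H`.
-/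

section Counting

variable {G : Type*}

theorem two_mul_ncard_le_natCard_of_add_notMem [AddGroup G] [Finite G] {s : Set G} {g : G}
    (h : ∀ x ∈ s, x + g ∉ s) : 2 * s.ncard ≤ Nat.card G := by
  have hdisj : Disjoint s ((· + g) '' s) := by
    rintro t hs hg x hx
    obtain ⟨y, hy, rfl⟩ := hg hx
    exact h y hy (hs hx)
  have himage : ((· + g) '' s).ncard = s.ncard :=
    Set.ncard_image_of_injective s (add_left_injective g)
  have hunion := Set.ncard_union_eq hdisj
  have := Set.ncard_le_card (s ∪ (· + g) '' s)
  omega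

theorem natCard_mul_ncard_le_of_forall_ncard_setOf_le {T : Type*} [AddGroup G] [Finite G]
    [Finite T] (φ : T → G) (A : Set G) {m : ℕ}
    (h : ∀ x, {t | φ t + x ∈ A}.ncard ≤ m) : Nat.card T * A.ncard ≤ Nat.card G * m := by
  classical
  have := Fintype.ofFinite G
  have := Fintype.ofFinite T
  rw [Nat.card_eq_fintype_card, Nat.card_eq_fintype_card]
  refine Finset.card_mul_le_card_mul (fun t x ↦ φ t + x ∈ A) (fun t _ ↦ ?_) fun x _ ↦ ?_
  · rw [← Set.ncard_coe_finset, Finset.coe_bipartiteAbove]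
    have hrange : A ⊆ Set.range (φ t + ·) := by simp [(add_left_surjective (φ t)).range_eq]
    simpa [Set.preimage] using
      (Set.ncard_preimage_of_injective_subset_range (add_right_injective (φ t)) hrange).ge
  · rw [← Set.ncard_coe_finset, Finset.coe_bipartiteBelow]
    simpa using h x

theorem ncard_le_ncard_inter_mul_natCard [AddCommGroup G] [Finite G] {S : Type*} [SetLike S G]
    [AddSubgroupClass S G] (W : S) {T C : Set G} (hT : T + W ⊆ T) (hC : T ⊆ C + W) :
    T.ncard ≤ (C ∩ T).ncard * Nat.card W := by
  have hcover : T ⊆ C ∩ T + W := by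
    intro x hx
    obtain ⟨c, hc, w, hw, rfl⟩ := hC hx
    have hcT : c ∈ T := hT ⟨c + w, hx, -w, neg_mem hw, add_neg_cancel_right c w⟩
    exact ⟨c, ⟨hc, hcT⟩, w, hw, rfl⟩
  exact (Set.ncard_le_ncard hcover).trans Set.natCard_add_le

end Counting

section Clebsch

theorem two_mul_ncard_inter_range_le_of_isIndepSet {V : Type*} {G : SimpleGraph V} {s : Set V}
    (hs : G.IsIndepSet s) {m : ℕ} [NeZero m] (c : Fin m → V) (hc : ∀ i, G.Adj (c i) (c (i + 1))) :
    2 * (s ∩ Set.range c).ncard ≤ m := by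
  have hle : (s ∩ Set.range c).ncard ≤ (c ⁻¹' s).ncard := by
    rw [← Set.image_preimage_eq_inter_range]
    exact Set.ncard_image_le
  have hindep : ∀ i ∈ c ⁻¹' s, i + 1 ∉ c ⁻¹' s := fun i hi hi' ↦ hs hi hi' (hc i).ne (hc i)
  have := two_mul_ncard_le_natCard_of_add_notMem hindep
  rw [Nat.card_fin] at this
  omega

/-- The Clebsch graph (the folded 5-cube), as the Cayley graph of `𝔽₂⁴` whose connection set
consists of the four unit vectors and the all-ones vector. -/
def clebschGraph : SimpleGraph (Fin 4 → ZMod 2) :=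
  SimpleGraph.circulantGraph (insert 1 (Set.range fun i ↦ Pi.single i 1))

namespace clebschGraph

/-- The first of two pentagons that partition the non-neighbours of `0`; these non-neighbours span
a Petersen graph. -/
def outerPentagon : Fin 5 → Fin 4 → ZMod 2 :=
  ![![1, 1, 0, 0], ![0, 0, 1, 1], ![0, 1, 1, 1], ![0, 1, 1, 0], ![1, 1, 1, 0]]

/-- The second of the two pentagons, see `clebschGraph.outerPentagon`. -/
def innerPentagon : Fin 5 → Fin 4 → ZMod 2 :=
  ![![1, 0, 1, 0], ![1, 0, 1, 1], ![1, 0, 0, 1], ![1, 1, 0, 1], ![0, 1, 0, 1]]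

theorem adj_iff {u v : Fin 4 → ZMod 2} :
    clebschGraph.Adj u v ↔ u - v = 1 ∨ ∃ i, u - v = Pi.single i 1 := by
  simp only [clebschGraph, SimpleGraph.circulantGraph_adj, Set.mem_insert_iff, Set.mem_range,
    eq_comm (a := Pi.single _ _), ← neg_sub u v, ZModModule.neg_eq_self, or_self]
  refine and_iff_right_of_imp ?_
  rintro h rfl
  simp [Pi.single_eq_zero_iff, eq_comm (a := (0 : Fin 4 → ZMod 2))] at h

instance : DecidableRel clebschGraph.Adj := fun _ _ ↦ decidable_of_iff' _ adj_iff

theorem adj_outerPentagon (i : Fin 5) :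
    clebschGraph.Adj (outerPentagon i) (outerPentagon (i + 1)) := by
  decide +revert

theorem adj_innerPentagon (i : Fin 5) :
    clebschGraph.Adj (innerPentagon i) (innerPentagon (i + 1)) := by
  decide +revert

set_option maxRecDepth 10000 in
theorem eq_zero_or_adj_or_mem_pentagon (v : Fin 4 → ZMod 2) :
    v = 0 ∨ clebschGraph.Adj v 0 ∨ v ∈ Set.range outerPentagon ∨ v ∈ Set.range innerPentagon := by
  simp only [Set.mem_range]
  decide +revert

theorem ncard_le_five_of_isIndepSet {A : Set (Fin 4 → ZMod 2)}
    (hA : clebschGraph.IsIndepSet A) : A.ncard ≤ 5 := by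
  rcases A.eq_empty_or_nonempty with rfl | ⟨x, hx⟩
  · simp
  have adj_translate {u v : Fin 4 → ZMod 2} (h : clebschGraph.Adj u v) :
      clebschGraph.Adj (u + x) (v + x) := SimpleGraph.circulantGraph_adj_translate.2 h
  have houter := two_mul_ncard_inter_range_le_of_isIndepSet hA (outerPentagon · + x)
    fun i ↦ adj_translate (adj_outerPentagon i)
  have hinner := two_mul_ncard_inter_range_le_of_isIndepSet hA (innerPentagon · + x)
    fun i ↦ adj_translate (adj_innerPentagon i)
  have hcover : A ⊆ {x} ∪ (A ∩ Set.range (outerPentagon · + x) ∪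
      A ∩ Set.range (innerPentagon · + x)) := by
    intro y hy
    rcases eq_zero_or_adj_or_mem_pentagon (y - x) with h | h | ⟨i, hi⟩ | ⟨i, hi⟩
    · exact .inl (sub_eq_zero.1 h)
    · have hyx : clebschGraph.Adj y x := by simpa using adj_translate h
      exact absurd hyx (hA hy hx hyx.ne)
    · exact .inr (.inl ⟨hy, i, eq_sub_iff_add_eq.1 hi⟩)
    · exact .inr (.inr ⟨hy, i, eq_sub_iff_add_eq.1 hi⟩)
  have hcard := Set.ncard_le_ncard hcover
  have hunion := Set.ncard_union_le {x} (A ∩ Set.range (outerPentagon · + x) ∪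
      A ∩ Set.range (innerPentagon · + x))
  have hunion' := Set.ncard_union_le (A ∩ Set.range (outerPentagon · + x))
    (A ∩ Set.range (innerPentagon · + x))
  rw [Set.ncard_singleton] at hunion
  omega

end clebschGraph

end Clebsch

section SumFree

/-- A set is sum-free if the sum of two (possibly equal) elements of it is never in it. -/
def IsSumFree {G : Type*} [Add G] (A : Set G) : Prop :=
  ∀ x ∈ A, ∀ y ∈ A, x + y ∉ A

theorem IsSumFree.zero_notMem {G : Type*} [AddZeroClass G] {A : Set G} (hA : IsSumFree A) :
    0 ∉ A := fun h ↦ hA 0 h 0 h (by rwa [add_zero])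

variable {V : Type*} [AddCommGroup V] [Module (ZMod 2) V] {A M : Set V}

theorem compl_subset_add_self_of_maximal_isSumFree (hM : Maximal IsSumFree M)
    (hne : M.Nonempty) : Mᶜ ⊆ M + M := by
  intro x hx
  by_contra hxMM
  have h0 : 0 ∉ M := hM.prop.zero_notMem
  have hx0 : x ≠ 0 := by
    rintro rfl
    obtain ⟨m, hm⟩ := hne
    exact hxMM ⟨m, hm, m, hm, ZModModule.add_self m⟩
  have hxm (m : V) (hm : m ∈ M) : x + m ∉ insert x M := by
    rintro (h | h)
    · exact h0 (add_eq_left.1 h ▸ hm)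
    · exact hxMM ⟨x + m, h, m, hm, by simp [add_assoc, ZModModule.add_self]⟩
  have hinsert : IsSumFree (insert x M) := by
    rintro a (rfl | ha) b (rfl | hb)
    · rw [ZModModule.add_self]
      exact fun h ↦ h.elim hx0.symm h0
    · exact hxm b hb
    · rw [add_comm]
      exact hxm a ha
    · exact fun h ↦ h.elim (fun h ↦ hxMM ⟨a, ha, b, hb, h⟩) (hM.prop a ha b hb)
  exact hx (hM.le_of_ge hinsert (Set.subset_insert x M) (Set.mem_insert x M))

variable [Finite V]

theorem IsSumFree.ncard_le_of_sum_four_mem (hA : IsSumFree A) (a : Fin 4 → V)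
    (ha : ∀ i, a i ∈ A) (hsum : ∑ i, a i ∈ A) : 16 * A.ncard ≤ 5 * Nat.card V := by
  let φ := Fintype.linearCombination (ZMod 2) a
  have hindep (x : V) : clebschGraph.IsIndepSet {t | φ t + x ∈ A} := by
    intro u hu v hv _ huv
    have hφ : φ (u - v) ∈ A := by
      rcases clebschGraph.adj_iff.1 huv with h | ⟨i, h⟩ <;> rw [h]
      · simpa [φ, Fintype.linearCombination_apply] using hsum
      · simpa [φ] using ha i
    exact hA _ hφ _ hv (by simpa [← add_assoc] using hu)
  have := natCard_mul_ncard_le_of_forall_ncard_setOf_le φ A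
    fun x ↦ clebschGraph.ncard_le_five_of_isIndepSet (hindep x)
  rw [Nat.card_fun, Nat.card_zmod, Nat.card_fin] at this
  omega

theorem natCard_eq_two_pow_finrank : Nat.card V = 2 ^ finrank (ZMod 2) V := by
  rw [Module.natCard_eq_pow_finrank (K := ZMod 2), Nat.card_zmod]

theorem finrank_add_one_eq_of_index_eq_two {H : Submodule (ZMod 2) V}
    (hH : H.toAddSubgroup.index = 2) :
    finrank (ZMod 2) H + 1 = finrank (ZMod 2) V := by
  have hcard := H.toAddSubgroup.card_mul_index
  have hH' : Nat.card H.toAddSubgroup = 2 ^ finrank (ZMod 2) H := natCard_eq_two_pow_finrank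
  rw [hH, hH', natCard_eq_two_pow_finrank (V := V), ← pow_succ] at hcard
  exact Nat.pow_right_injective le_rfl hcard

theorem two_mul_natCard_eq_of_finrank_add_one_eq {H : Submodule (ZMod 2) V}
    (hH : finrank (ZMod 2) H + 1 = finrank (ZMod 2) V) :
    2 * Nat.card H = Nat.card V := by
  rw [natCard_eq_two_pow_finrank, natCard_eq_two_pow_finrank (V := V), ← hH, pow_succ']

theorem IsSumFree.exists_hyperplane_disjoint (hA : IsSumFree A)
    (hcard : 5 * Nat.card V < 16 * A.ncard) :
    ∃ H : Submodule (ZMod 2) V, finrank (ZMod 2) H + 1 = finrank (ZMod 2) V ∧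
      Disjoint A H := by
  obtain ⟨M, hAM, hM⟩ :=
    Set.Finite.exists_le_maximal (Set.toFinite {S : Set V | IsSumFree S}) hA
  have hMcard : 5 * Nat.card V < 16 * M.ncard := by
    have := Set.ncard_le_ncard hAM
    omega
  obtain ⟨m, hm⟩ : M.Nonempty := Set.nonempty_of_ncard_ne_zero (by omega)
  have hadd : ∀ x ∈ Mᶜ, ∀ y ∈ Mᶜ, x + y ∈ Mᶜ := by
    intro x hx y hy hxy
    obtain ⟨a, ha, b, hb, rfl⟩ := compl_subset_add_self_of_maximal_isSumFree hM ⟨m, hm⟩ hx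
    obtain ⟨c, hc, d, hd, rfl⟩ := compl_subset_add_self_of_maximal_isSumFree hM ⟨m, hm⟩ hy
    have := hM.prop.ncard_le_of_sum_four_mem ![a, b, c, d]
      (by simp [Fin.forall_fin_succ, *]) (by simpa [Fin.sum_univ_four, add_assoc] using hxy)
    omega
  let H : AddSubgroup V :=
    { carrier := Mᶜ
      zero_mem' := hM.prop.zero_notMem
      add_mem' := fun {x y} hx hy ↦ hadd x hx y hy
      neg_mem' := fun {x} hx ↦ by rwa [ZModModule.neg_eq_self] }
  have hindex : H.index = 2 := by
    refine AddSubgroup.index_eq_two_iff_exists_notMem_and.2 ⟨m, not_not.2 hm, fun x ↦ ?_⟩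
    exact or_iff_not_imp_right.2 fun hx ↦ hM.prop x (not_not.1 hx) m hm
  exact ⟨AddSubgroup.toZModSubmodule 2 H, finrank_add_one_eq_of_index_eq_two hindex,
    Set.disjoint_left.2 fun x hx hxH ↦ hxH (hAM hx)⟩

end SumFree

section PGFree

/-- For `K = 𝔽_q`, the set `E` is `PG(n-1, q)`-free: no `n`-dimensional subspace has all its nonzero
vectors in `E`. The index `n` is the vector space dimension, one more than the projective one. -/
def IsPGFree (K : Type*) {V : Type*} [DivisionRing K] [AddCommGroup V] [Module K V] (n : ℕ)
    (E : Set V) : Prop :=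
  ¬ ∃ W : Submodule K V, finrank K W = n ∧ ∀ x ∈ W, x ≠ 0 → x ∈ E

section DivisionRing

variable {K V : Type*} [DivisionRing K] [AddCommGroup V] [Module K V]

theorem not_isPGFree_zero {E : Set V} : ¬ IsPGFree K 0 E :=
  not_not.2 ⟨⊥, finrank_bot K V, fun _ hx hx0 ↦ absurd ((Submodule.mem_bot K).1 hx) hx0⟩

theorem finrank_comap_mkQ [Module.Finite K V] (W : Submodule K V) (U : Submodule K (V ⧸ W)) :
    finrank K (U.comap W.mkQ) = finrank K U + finrank K W := by
  have hquot :=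
    (Submodule.quotientQuotientEquivQuotient W _ (Submodule.le_comap_mkQ W U)).finrank_eq
  rw [Submodule.map_comap_eq_of_surjective W.mkQ_surjective] at hquot
  have := U.finrank_quotient_add_finrank
  have := W.finrank_quotient_add_finrank
  have := (U.comap W.mkQ).finrank_quotient_add_finrank
  omega

theorem exists_submodule_le_finrank_eq {F : Submodule K V} {m : ℕ}
    (hm : m ≤ finrank K F) : ∃ F' ≤ F, finrank K F' = m := by
  obtain ⟨f, hf⟩ := exists_linearIndependent_of_le_finrank hm
  refine ⟨(Submodule.span K (Set.range f)).map F.subtype, Submodule.map_subtype_le F _, ?_⟩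
  rw [Submodule.finrank_map_subtype_eq, finrank_span_eq_card hf, Fintype.card_fin]

theorem mem_compl_add_iff_mkQ_notMem_kernImage {W : Submodule K V} {E : Set V} {x : V} :
    x ∈ Eᶜ + (W : Set V) ↔ W.mkQ x ∉ Set.kernImage W.mkQ E := by
  rw [Set.kernImage_eq_compl, Set.mem_compl_iff, not_not]
  constructor
  · rintro ⟨y, hy, w, hw, rfl⟩
    have hw : w ∈ W := hw
    exact ⟨y, hy, by simp [hw]⟩
  · rintro ⟨y, hy, hyx⟩
    exact ⟨y, hy, x - y, (Submodule.Quotient.eq W).1 hyx.symm, add_sub_cancel y x⟩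

/-- The set `Set.kernImage W.mkQ E` consists of the cosets of `W` contained in `E`. -/
theorem IsPGFree.kernImage_mkQ [Module.Finite K V] {n : ℕ} {E : Set V} {W : Submodule K V}
    (hE : IsPGFree K (n + finrank K W) E) (hW : ∀ x ∈ W, x ≠ 0 → x ∈ E) :
    IsPGFree K n (Set.kernImage W.mkQ E) := by
  rintro ⟨U, hU, hUE⟩
  refine hE ⟨U.comap W.mkQ, by rw [finrank_comap_mkQ, hU], fun x hx hx0 ↦ ?_⟩
  by_cases hxW : x ∈ W
  · exact hW x hxW hx0
  · exact hUE (W.mkQ x) hx (by simpa using hxW) rfl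

end DivisionRing

variable {V : Type*} [AddCommGroup V] [Module (ZMod 2) V] {E : Set V} {n : ℕ}

theorem zmod_two_eq_zero_or_eq_one (c : ZMod 2) : c = 0 ∨ c = 1 := by
  decide +revert

theorem IsPGFree.eq_empty (hE : IsPGFree (ZMod 2) 1 E) (h0 : 0 ∉ E) : E = ∅ := by
  rw [Set.eq_empty_iff_forall_notMem]
  intro x hx
  refine hE ⟨Submodule.span (ZMod 2) {x}, finrank_span_singleton (ne_of_mem_of_not_mem hx h0),
    fun y hy hy0 ↦ ?_⟩
  obtain ⟨c, rfl⟩ := Submodule.mem_span_singleton.1 hy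
  rcases zmod_two_eq_zero_or_eq_one c with rfl | rfl <;> simp_all

theorem IsPGFree.isSumFree (hE : IsPGFree (ZMod 2) 2 E) (h0 : 0 ∉ E) : IsSumFree E := by
  intro x hx y hy hxy
  have hind : LinearIndependent (ZMod 2) ![x, y] := by
    rw [LinearIndependent.pair_iff' (ne_of_mem_of_not_mem hx h0)]
    rintro c rfl
    rcases zmod_two_eq_zero_or_eq_one c with rfl | rfl
    · exact h0 (by simpa using hy)
    · exact h0 (by simpa [ZModModule.add_self] using hxy)
  refine hE ⟨Submodule.span (ZMod 2) (Set.range ![x, y]), finrank_span_eq_card hind, ?_⟩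
  intro z hz hz0
  rw [Matrix.range_cons, Matrix.range_cons, Matrix.range_empty, Set.union_empty,
    Set.singleton_union, Submodule.mem_span_pair] at hz
  obtain ⟨s, t, rfl⟩ := hz
  rcases zmod_two_eq_zero_or_eq_one s with rfl | rfl <;>
    rcases zmod_two_eq_zero_or_eq_one t with rfl | rfl <;> simp_all

variable [Finite V]

theorem IsPGFree.compl_add_eq_univ {W : Submodule (ZMod 2) V}
    (hE : IsPGFree (ZMod 2) (finrank (ZMod 2) W + 1) E) (h0 : 0 ∉ E)
    (hW : ∀ x ∈ W, x ≠ 0 → x ∈ E) : Eᶜ + (W : Set V) = Set.univ := by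
  rw [add_comm] at hE
  have hempty := (hE.kernImage_mkQ hW).eq_empty fun h ↦ h0 (h (map_zero W.mkQ))
  refine Set.eq_univ_of_forall fun x ↦ mem_compl_add_iff_mkQ_notMem_kernImage.2 ?_
  simp [hempty]

/-- The binary **Bose–Burton theorem**. -/
theorem IsPGFree.two_mul_natCard_le (hE : IsPGFree (ZMod 2) n E) (h0 : 0 ∉ E) :
    2 * Nat.card V ≤ 2 ^ n * Eᶜ.ncard := by
  induction n with
  | zero => exact absurd hE not_isPGFree_zero
  | succ n ih =>
    by_cases hn : IsPGFree (ZMod 2) n E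
    · have := ih hn
      rw [pow_succ]
      linarith
    · obtain ⟨W, rfl, hWE⟩ := not_not.1 hn
      have := ncard_le_ncard_inter_mul_natCard W (Set.subset_univ _)
        (hE.compl_add_eq_univ h0 hWE).ge
      rw [Set.ncard_univ, Set.inter_univ, natCard_eq_two_pow_finrank (V := W)] at this
      rw [pow_succ]
      linarith

theorem five_mul_natCard_quotient_lt_mul_ncard_kernImage {W : Submodule (ZMod 2) V}
    (hcard : 2 ^ (finrank (ZMod 2) W + 4) * Eᶜ.ncard < 11 * Nat.card V) :
    5 * Nat.card (V ⧸ W) < 16 * (Set.kernImage W.mkQ E).ncard := by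
  have := Module.finite_of_finite (ZMod 2) (M := V ⧸ W)
  have hcompl : (Set.kernImage W.mkQ E)ᶜ.ncard ≤ Eᶜ.ncard := by
    rw [Set.kernImage_eq_compl, compl_compl]
    exact Set.ncard_image_le
  have hsum := Set.ncard_add_ncard_compl (Set.kernImage W.mkQ E)
  have hlt : 16 * Eᶜ.ncard < 11 * Nat.card (V ⧸ W) := by
    refine Nat.lt_of_mul_lt_mul_left (a := 2 ^ finrank (ZMod 2) W) ?_
    rw [W.card_eq_card_quotient_mul_card, natCard_eq_two_pow_finrank (V := W), pow_add] at hcard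
    linarith
  omega

theorem IsPGFree.exists_hyperplane (hE : IsPGFree (ZMod 2) (n + 2) E) (h0 : 0 ∉ E)
    (hcard : 2 ^ (n + 4) * Eᶜ.ncard < 11 * Nat.card V) :
    ∃ H : Submodule (ZMod 2) V, finrank (ZMod 2) H + 1 = finrank (ZMod 2) V ∧
      Nat.card V ≤ 2 ^ (n + 1) * (Eᶜ ∩ H).ncard := by
  have hn : ¬ IsPGFree (ZMod 2) n E := by
    intro hn
    have := hn.two_mul_natCard_le h0
    have : 2 ^ (n + 4) * Eᶜ.ncard = 16 * (2 ^ n * Eᶜ.ncard) := by ring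
    have := Nat.card_pos (α := V)
    omega
  obtain ⟨W, rfl, hWE⟩ := not_not.1 hn
  rw [add_comm] at hE
  have := Module.finite_of_finite (ZMod 2) (M := V ⧸ W)
  have hsumfree := (hE.kernImage_mkQ hWE).isSumFree fun h ↦ h0 (h (map_zero W.mkQ))
  obtain ⟨H, hH, hEH⟩ := hsumfree.exists_hyperplane_disjoint
    (five_mul_natCard_quotient_lt_mul_ncard_kernImage hcard)
  have hfinrank : finrank (ZMod 2) (H.comap W.mkQ) + 1 = finrank (ZMod 2) V := by
    rw [finrank_comap_mkQ, add_right_comm, hH, W.finrank_quotient_add_finrank]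
  refine ⟨H.comap W.mkQ, hfinrank, ?_⟩
  have hadd : (H.comap W.mkQ : Set V) + W ⊆ H.comap W.mkQ := by
    rintro _ ⟨x, hx, w, hw, rfl⟩
    exact add_mem hx (Submodule.le_comap_mkQ W H hw)
  have hcover : (H.comap W.mkQ : Set V) ⊆ Eᶜ + W := fun x hx ↦
    mem_compl_add_iff_mkQ_notMem_kernImage.2 fun hxE ↦ Set.disjoint_left.1 hEH hxE hx
  have hle := ncard_le_ncard_inter_mul_natCard W hadd hcover
  rw [natCard_eq_two_pow_finrank (V := W)] at hle
  calc
    Nat.card V = 2 * Nat.card (H.comap W.mkQ) :=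
      (two_mul_natCard_eq_of_finrank_add_one_eq hfinrank).symm
    _ ≤ 2 * ((Eᶜ ∩ H.comap W.mkQ).ncard * 2 ^ finrank (ZMod 2) W) := Nat.mul_le_mul_left 2 hle
    _ = 2 ^ (finrank (ZMod 2) W + 1) * (Eᶜ ∩ H.comap W.mkQ).ncard := by ring

theorem IsPGFree.preimage_hyperplane (hE : IsPGFree (ZMod 2) (n + 2) E) (h0 : 0 ∉ E)
    (hcard : 2 ^ (n + 4) * Eᶜ.ncard < 11 * Nat.card V) {H : Submodule (ZMod 2) V}
    (hH : finrank (ZMod 2) H + 1 = finrank (ZMod 2) V)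
    (hHE : Nat.card V ≤ 2 ^ (n + 1) * (Eᶜ ∩ H).ncard) :
    IsPGFree (ZMod 2) (n + 1) (H.subtype ⁻¹' E) := by
  rintro ⟨U, hU, hUE⟩
  let W := U.map H.subtype
  have hWfinrank : finrank (ZMod 2) W = n + 1 := by
    rw [Submodule.finrank_map_subtype_eq, hU]
  have hWE : ∀ x ∈ W, x ≠ 0 → x ∈ E := by
    rintro _ ⟨u, hu, rfl⟩ hu0
    exact hUE u hu (by simpa using hu0)
  have hcover : Eᶜ + (W : Set V) = Set.univ :=
    IsPGFree.compl_add_eq_univ (by rwa [hWfinrank]) h0 hWE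
  have hcompl_add : (H : Set V)ᶜ + W ⊆ (H : Set V)ᶜ := by
    rintro _ ⟨x, hx, w, hw, rfl⟩ hxw
    exact hx ((H.add_mem_iff_left (Submodule.map_subtype_le H U hw)).1 hxw)
  have hle := ncard_le_ncard_inter_mul_natCard W hcompl_add (hcover ▸ Set.subset_univ _)
  have hWcard : Nat.card W = 2 ^ (n + 1) := by rw [natCard_eq_two_pow_finrank, hWfinrank]
  have hsplit : (Eᶜ ∩ H).ncard + (Eᶜ ∩ (H : Set V)ᶜ).ncard = Eᶜ.ncard :=
    Set.ncard_inter_add_ncard_sdiff_eq_ncard Eᶜ H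
  have hHcard := two_mul_natCard_eq_of_finrank_add_one_eq hH
  have hHsum : Nat.card H + (H : Set V)ᶜ.ncard = Nat.card V :=
    Set.ncard_add_ncard_compl (H : Set V)
  have := Nat.card_pos (α := V)
  rw [hWcard] at hle
  rw [← hsplit] at hcard
  have : 2 ^ (n + 4) = 8 * 2 ^ (n + 1) := by ring
  rw [this] at hcard
  linarith

theorem IsPGFree.exists_submodule_disjoint (hE : IsPGFree (ZMod 2) n E) (h0 : 0 ∉ E)
    (hcard : 2 ^ (n + 2) * Eᶜ.ncard < 11 * Nat.card V) :
    ∃ F : Submodule (ZMod 2) V, finrank (ZMod 2) F + n = finrank (ZMod 2) V + 1 ∧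
      Disjoint E F := by
  induction n generalizing V with
  | zero => exact absurd hE not_isPGFree_zero
  | succ n ih =>
    obtain _ | n := n
    · exact ⟨⊤, by rw [finrank_top], by simp [hE.eq_empty h0]⟩
    obtain ⟨H, hH, hHE⟩ := hE.exists_hyperplane h0 hcard
    have hcompl : (H.subtype ⁻¹' E)ᶜ.ncard = (Eᶜ ∩ H).ncard := by
      rw [← Set.preimage_compl, ← Set.ncard_image_of_injective _ H.injective_subtype,
        Set.image_preimage_eq_inter_range, Submodule.coe_subtype, Subtype.range_coe]
    have hcard' : 2 ^ (n + 1 + 2) * (H.subtype ⁻¹' E)ᶜ.ncard < 11 * Nat.card H := by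
      have hle : (Eᶜ ∩ H).ncard ≤ Eᶜ.ncard := Set.ncard_le_ncard Set.inter_subset_left
      have := two_mul_natCard_eq_of_finrank_add_one_eq hH
      rw [hcompl]
      refine Nat.lt_of_mul_lt_mul_left (a := 2) ?_
      calc
        2 * (2 ^ (n + 1 + 2) * (Eᶜ ∩ H).ncard) = 2 ^ (n + 2 + 2) * (Eᶜ ∩ H).ncard := by ring
        _ ≤ 2 ^ (n + 2 + 2) * Eᶜ.ncard := Nat.mul_le_mul_left _ hle
        _ < 11 * Nat.card V := hcard
        _ = 2 * (11 * Nat.card H) := by omega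
    obtain ⟨F, hF, hEF⟩ := ih (hE.preimage_hyperplane h0 hcard hH hHE) h0 hcard'
    refine ⟨F.map H.subtype, by rw [Submodule.finrank_map_subtype_eq]; omega, ?_⟩
    rw [Submodule.map_coe, Set.disjoint_image_right]
    exact hEF

end PGFree

theorem stmt_13_general {V : Type*} [AddCommGroup V] [Module (ZMod 2) V] [Finite V] {n : ℕ}
    {E : Set V} (h0 : 0 ∉ E) (hfree : IsPGFree (ZMod 2) n E)
    (hcard : (1 - 2 / 2 ^ n - 3 / 2 ^ (n + 2) : ℝ) * Nat.card V < E.ncard) :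
    ∃ F : Submodule (ZMod 2) V, finrank (ZMod 2) F + n = finrank (ZMod 2) V + 1 ∧
      Disjoint E F := by
  refine hfree.exists_submodule_disjoint h0 ?_
  have hsum : (E.ncard : ℝ) + Eᶜ.ncard = Nat.card V := by
    exact_mod_cast Set.ncard_add_ncard_compl E
  have hcoef : (1 - 2 / 2 ^ n - 3 / 2 ^ (n + 2) : ℝ) = 1 - 11 / 2 ^ (n + 2) := by
    field_simp
    ring
  have hlt : (Eᶜ.ncard : ℝ) < 11 * Nat.card V / 2 ^ (n + 2) := by
    rw [hcoef] at hcard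
    linarith [div_mul_eq_mul_div (11 : ℝ) (2 ^ (n + 2)) (Nat.card V)]
  rw [lt_div_iff₀' (by positivity)] at hlt
  exact_mod_cast hlt

theorem stmt_13 (r n : ℕ) (hn : 2 ≤ n) (hr : n + 2 ≤ r)
    (E : Set (Fin r → ZMod 2)) (h0 : (0 : Fin r → ZMod 2) ∉ E)
    (hfree : ¬ ∃ W : Submodule (ZMod 2) (Fin r → ZMod 2),
      Module.finrank (ZMod 2) W = n ∧ ∀ x ∈ W, x ≠ 0 → x ∈ E)
    (hcard : (1 - 2 / 2^n - 3 / 2^(n+2) : ℝ) * 2^r < (E.ncard : ℝ)) :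
    ∃ F : Submodule (ZMod 2) (Fin r → ZMod 2),
      Module.finrank (ZMod 2) F = r - n ∧ E ∩ (F : Set (Fin r → ZMod 2)) = ∅ := by
  obtain ⟨F, hF, hEF⟩ := stmt_13_general h0 hfree (by simpa using hcard)
  rw [finrank_fin_fun] at hF
  obtain ⟨F', hF'F, hF'⟩ := exists_submodule_le_finrank_eq (F := F) (m := r - n) (by omega)
  exact ⟨F', hF', (hEF.mono_right (SetLike.coe_subset_coe.2 hF'F)).inter_eq⟩
end

section
/- Let r ≥ n ≥ 2 and let E ⊆ GF(2)^r \ {0} be PG(n−1,2)-free with |E| > (1 − 3/2^n)·2^r. Then there exists a subspace K of GF(2)^r of dimension r − n + 2 such that E ∩ K is triangle-free (no x, y ∈ E ∩ K with x ≠ y and x + y ∈ E ∩ K), and moreover |E ∩ K| > (1/4)·2^{r−n+2}. -/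
/-
Work with the complement `B` of `E`, which contains `0` and meets every `n`-dimensional subspace in
a nonzero vector, and which has fewer than `3 / 2 ^ n` of the points. For `n = 2` this forces the
complement of `B` to be sum-free. For `n ≥ 3` some hyperplane contains at least `|V| / 2 ^ (n - 1)`
points of `B`, hence misses fewer than `|V| / 2 ^ n` of them; a subspace of dimension `n - 1` of
that hyperplane which avoids `B` would have too few points of `B` off the hyperplane to extend to,
so one can pass to the hyperplane and decrease `n`.

The dense hyperplane is found by projecting from a point outside `B`, which decreases `n` while not
increasing `|B|`. When `n = 3` the factor `2` lost in the size of the space is only affordable if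
the projection identifies many pairs of points of `B`. If every hyperplane misses at least
`|V| / 8` points of `B`, then the Fourier coefficients of `B` are small enough to provide such a
popular difference, and the projected set has density less than `2 / 3`, so that its complement is
sum-free of density more than `1 / 3`; by Fourier analysis again, such a set misses a hyperplane.
-/

namespace BinaryGeometry

open Finset Module Submodule

section Counting

variable {α : Type*} [Finite α]

lemma ncard_le_ncard_inter_add_ncard_compl (E K : Set α) :
    K.ncard ≤ (E ∩ K).ncard + Eᶜ.ncard := by
  refine (Set.ncard_le_ncard fun x hx ↦ ?_).trans (Set.ncard_union_le (E ∩ K) Eᶜ)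
  by_cases hxE : x ∈ E
  · exact Or.inl ⟨hxE, hx⟩
  · exact Or.inr hxE

lemma two_pow_mul_ncard_compl_lt {n : ℕ} {E : Set α}
    (hE : (1 - 3 / 2 ^ n : ℝ) * Nat.card α < E.ncard) :
    2 ^ n * Eᶜ.ncard < 3 * Nat.card α := by
  have hcompl : (E.ncard + Eᶜ.ncard : ℝ) = Nat.card α := mod_cast Set.ncard_add_ncard_compl E
  rify
  rw [← hcompl] at hE ⊢
  field_simp at hE
  linarith

variable {G : Type*} [AddGroup G] {S : Finset G} {u : G}

lemma two_mul_card_filter_le_card_of_not_add (hS : ∀ x ∈ S, x + u ∈ S)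
    (p : G → Prop) [DecidablePred p] (hp : ∀ x ∈ S, p x → ¬ p (x + u)) :
    2 * #{x ∈ S | p x} ≤ #S := by
  have hle : #{x ∈ S | p x} ≤ #{x ∈ S | ¬ p x} := by
    refine card_le_card_of_injOn (· + u) (fun x hx ↦ ?_) (add_left_injective u).injOn
    obtain ⟨hxS, hpx⟩ := mem_filter.1 hx
    exact mem_filter.2 ⟨hS x hxS, hp x hxS hpx⟩
  have := card_filter_add_card_filter_not (s := S) (p ·)
  lia

end Counting

section LinearAlgebra

lemma finrank_comap_mkQ {K V : Type*} [DivisionRing K] [AddCommGroup V] [Module K V]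
    [Module.Finite K V] (p : Submodule K V) (W : Submodule K (V ⧸ p)) :
    finrank K (W.comap p.mkQ) = finrank K W + finrank K p := by
  have hquot := (quotientQuotientEquivQuotient p _ (le_comap_mkQ p W)).finrank_eq
  rw [map_comap_eq_of_surjective p.mkQ_surjective] at hquot
  have := finrank_quotient_add_finrank p
  have := finrank_quotient_add_finrank W
  have := finrank_quotient_add_finrank (W.comap p.mkQ)
  lia

end LinearAlgebra

variable {V : Type*} [AddCommGroup V] [Module (ZMod 2) V]

section Dual

lemma eq_zero_or_eq_one (z : ZMod 2) : z = 0 ∨ z = 1 := by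
  revert z
  decide

lemma mem_span_singleton_iff_eq_zero_or_eq {u x : V} :
    x ∈ span (ZMod 2) {u} ↔ x = 0 ∨ x = u := by
  constructor
  · intro hx
    obtain ⟨a, rfl⟩ := mem_span_singleton.1 hx
    obtain rfl | rfl := eq_zero_or_eq_one a <;> simp
  · rintro (rfl | rfl)
    exacts [zero_mem _, mem_span_singleton_self x]

lemma natCard_dual [Finite V] : Nat.card (Dual (ZMod 2) V) = Nat.card V := by
  rw [natCard_eq_pow_finrank (K := ZMod 2), natCard_eq_pow_finrank (K := ZMod 2) (V := V),
    Subspace.dual_finrank_eq]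

variable {f : Dual (ZMod 2) V}

lemma two_mul_natCard_ker [Finite V] (hf : f ≠ 0) :
    2 * Nat.card (LinearMap.ker f) = Nat.card V := by
  rw [natCard_eq_pow_finrank (K := ZMod 2) (V := V),
    natCard_eq_pow_finrank (K := ZMod 2) (V := LinearMap.ker f),
    ← Dual.finrank_ker_add_one_of_ne_zero hf, Nat.card_zmod, pow_succ']

variable [Fintype V]

lemma two_mul_card_dual_eq_zero (hf : f ≠ 0) : 2 * #{x | f x = 0} = Nat.card V := by
  rw [← two_mul_natCard_ker hf]
  exact congrArg (2 * ·) (Nat.subtype_card _ fun x ↦ by simp).symm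

lemma two_mul_card_dual_ne_zero (hf : f ≠ 0) : 2 * #{x | f x ≠ 0} = Nat.card V := by
  have hsplit := card_filter_add_card_filter_not (s := (univ : Finset V)) (f · = 0)
  have hzero := two_mul_card_dual_eq_zero hf
  rw [card_univ, ← Nat.card_eq_fintype_card] at hsplit
  lia

end Dual

section Projection

variable {u : V}

lemma two_mul_natCard_quotient_span_singleton (hu : u ≠ 0) :
    2 * Nat.card (V ⧸ span (ZMod 2) {u}) = Nat.card V := by
  rw [card_eq_card_quotient_mul_card (span (ZMod 2) {u}), natCard_eq_pow_finrank (K := ZMod 2)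
    (V := span (ZMod 2) {u}), finrank_span_singleton hu, Nat.card_zmod, pow_one, mul_comm]

lemma exists_dual_card_le_of_quotient {B : Finset V} (hu : u ≠ 0)
    [DecidableEq (V ⧸ span (ZMod 2) {u})] {m : ℕ}
    (h : ∃ f : Dual (ZMod 2) (V ⧸ span (ZMod 2) {u}), f ≠ 0 ∧
      Nat.card (V ⧸ span (ZMod 2) {u}) ≤ m * #{y ∈ B.image (span (ZMod 2) {u}).mkQ | f y = 0}) :
    ∃ f : Dual (ZMod 2) V, f ≠ 0 ∧ Nat.card V ≤ 2 * m * #{x ∈ B | f x = 0} := by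
  obtain ⟨f, hf, hle⟩ := h
  refine ⟨f ∘ₗ (span (ZMod 2) {u}).mkQ, fun h ↦ hf ?_, ?_⟩
  · exact (LinearMap.cancel_right (mkQ_surjective _)).1 (h.trans (LinearMap.zero_comp _).symm)
  · rw [← two_mul_natCard_quotient_span_singleton hu, mul_assoc]
    rw [filter_image] at hle
    exact Nat.mul_le_mul_left 2 (hle.trans (Nat.mul_le_mul_left m card_image_le))

variable [DecidableEq V]

lemma card_filter_add_eq_le_card_inter (B : Finset V) (u : V) :
    #{p ∈ B ×ˢ B | p.1 + p.2 = u} ≤ #(B ∩ B.image (· + u)) := by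
  refine card_le_card_of_injOn Prod.fst (fun p hp ↦ ?_) fun p hp q hq hpq ↦ ?_
  · obtain ⟨hpB, rfl⟩ := mem_filter.1 hp
    obtain ⟨h₁, h₂⟩ := mem_product.1 hpB
    refine mem_inter.2 ⟨h₁, mem_image.2 ⟨p.2, h₂, ?_⟩⟩
    simp [add_left_comm, ZModModule.add_self]
  · have hsum : p.1 + p.2 = q.1 + q.2 := (mem_filter.1 hp).2.trans (mem_filter.1 hq).2.symm
    exact Prod.ext hpq (add_left_cancel (hpq ▸ hsum))

lemma two_mul_card_image_mkQ_add_card_le [DecidableEq (V ⧸ span (ZMod 2) {u})] (hu : u ≠ 0)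
    (B : Finset V) :
    2 * #(B.image (span (ZMod 2) {u}).mkQ) + #{p ∈ B ×ˢ B | p.1 + p.2 = u} ≤ 2 * #B := by
  set π := (span (ZMod 2) {u}).mkQ
  have hπ (x : V) : π (x + u) = π x := by
    simp [π]
  have himage : (B ∪ B.image (· + u)).image π = B.image π := by
    rw [image_union, image_image, Function.comp_def]
    simp_rw [hπ, union_self]
  have hclosed : ∀ x ∈ B ∪ B.image (· + u), x + u ∈ B ∪ B.image (· + u) := by
    simp only [mem_union, mem_image]
    rintro _ (hx | ⟨y, hy, rfl⟩)
    · exact Or.inr ⟨_, hx, rfl⟩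
    · exact Or.inl (by simpa [add_assoc, ZModModule.add_self] using hy)
  have hfiber : 2 * #((B ∪ B.image (· + u)).image π) ≤ #(B ∪ B.image (· + u)) := by
    refine mul_card_image_le_card _ _ fun b hb ↦ ?_
    obtain ⟨x, hx, rfl⟩ := mem_image.1 hb
    have hpair : #{x, x + u} = 2 := card_pair (by simpa using hu)
    refine hpair.ge.trans <| card_le_card (insert_subset_iff.2 ⟨?_, singleton_subset_iff.2 ?_⟩)
    · simp only [mem_filter, hx, true_and]
    · simp only [mem_filter, hclosed x hx, hπ, true_and]
  have hshift : #(B.image (· + u)) = #B := card_image_of_injective B (add_left_injective u)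
  have := card_union_add_card_inter B (B.image (· + u))
  have := card_filter_add_eq_le_card_inter B u
  rw [himage] at hfiber
  lia

end Projection

section Fourier

/-- The nontrivial character `z ↦ (-1) ^ z` of the two-element field, with real values. -/
noncomputable def signChar : AddChar (ZMod 2) ℝ :=
  AddChar.zmodChar 2 (ζ := -1) (by norm_num)

lemma signChar_eq_ite (z : ZMod 2) : signChar z = if z = 0 then 1 else -1 := by
  obtain rfl | rfl := eq_zero_or_eq_one z
  · simp
  · simp [signChar, AddChar.zmodChar_apply, ZMod.val_one]

lemma sum_dual_signChar [Finite V] [Fintype (Dual (ZMod 2) V)] [DecidableEq V] (x : V) :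
    ∑ f : Dual (ZMod 2) V, signChar (f x) = if x = 0 then (Nat.card V : ℝ) else 0 := by
  let ψ : AddChar (Dual (ZMod 2) V) ℝ :=
    signChar.compAddMonoidHom (Dual.eval (ZMod 2) V x).toAddMonoidHom
  have hψ : ψ = 0 ↔ x = 0 := by
    rw [← forall_dual_apply_eq_zero_iff (ZMod 2) x, DFunLike.ext_iff]
    refine forall_congr' fun f ↦ ?_
    obtain h | h := eq_zero_or_eq_one (f x) <;> norm_num [ψ, signChar_eq_ite, h]
  change ∑ f, ψ f = _
  simp only [AddChar.sum_eq_ite, hψ, ← Nat.card_eq_fintype_card, natCard_dual]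

/-- The Fourier coefficient of the indicator function of `A` at the character `(-1) ^ f`. -/
noncomputable def walshCoeff (A : Finset V) (f : Dual (ZMod 2) V) : ℝ := ∑ x ∈ A, signChar (f x)

lemma walshCoeff_zero (A : Finset V) : walshCoeff A 0 = #A := by
  simp [walshCoeff]

lemma walshCoeff_eq_card_sub (A : Finset V) (f : Dual (ZMod 2) V) :
    walshCoeff A f = #A - 2 * #{x ∈ A | f x ≠ 0} := by
  have := card_filter_add_card_filter_not (s := A) (f · = 0)
  simp only [walshCoeff, signChar_eq_ite, sum_ite, sum_const, nsmul_eq_mul, ← this, Nat.cast_add]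
  ring

variable [Finite V] [Fintype (Dual (ZMod 2) V)]

lemma sum_walshCoeff_sq (A : Finset V) : ∑ f, walshCoeff A f ^ 2 = Nat.card V * (#A : ℝ) := by
  classical
  calc
    ∑ f, walshCoeff A f ^ 2 = ∑ f : Dual (ZMod 2) V, ∑ x ∈ A, ∑ y ∈ A, signChar (f (x + y)) := by
      simp [walshCoeff, sq, sum_mul_sum, AddChar.map_add_eq_mul]
    _ = ∑ x ∈ A, ∑ y ∈ A, ∑ f : Dual (ZMod 2) V, signChar (f (x + y)) := by
      rw [sum_comm]
      exact sum_congr rfl fun _ _ ↦ sum_comm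
    _ = ∑ _ ∈ A, (Nat.card V : ℝ) := by
      refine sum_congr rfl fun _ hx ↦ ?_
      simp only [sum_dual_signChar, add_eq_zero_iff_eq_neg', ZModModule.neg_eq_self, sum_ite_eq',
        hx, if_true]
    _ = Nat.card V * (#A : ℝ) := by simp [mul_comm]

variable [DecidableEq V]

lemma sum_walshCoeff_cube (A : Finset V) :
    ∑ f, walshCoeff A f ^ 3 = Nat.card V * (#{p ∈ A ×ˢ A | p.1 + p.2 ∈ A} : ℝ) := by
  calc
    ∑ f, walshCoeff A f ^ 3 =
        ∑ f : Dual (ZMod 2) V, ∑ p ∈ A ×ˢ A, ∑ z ∈ A, signChar (f (p.1 + p.2 + z)) := by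
      refine sum_congr rfl fun f _ ↦ ?_
      simp only [pow_three', walshCoeff, sum_mul_sum, ← sum_product', map_add,
        AddChar.map_add_eq_mul]
    _ = ∑ p ∈ A ×ˢ A, ∑ z ∈ A, ∑ f : Dual (ZMod 2) V, signChar (f (p.1 + p.2 + z)) := by
      rw [sum_comm]
      exact sum_congr rfl fun _ _ ↦ sum_comm
    _ = ∑ p ∈ A ×ˢ A, if p.1 + p.2 ∈ A then (Nat.card V : ℝ) else 0 := by
      refine sum_congr rfl fun p _ ↦ ?_
      simp only [sum_dual_signChar, add_eq_zero_iff_eq_neg', ZModModule.neg_eq_self, sum_ite_eq']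
    _ = Nat.card V * (#{p ∈ A ×ˢ A | p.1 + p.2 ∈ A} : ℝ) := by
      simp [← sum_filter, mul_comm]

variable [DecidableEq (Dual (ZMod 2) V)]

-- For `M` a bound on the coefficients with `f ≠ 0`, the left side has a sign.
lemma sum_walshCoeff_sq_mul_sub (A : Finset V) (M : ℝ) :
    ∑ f ∈ univ.erase 0, walshCoeff A f ^ 2 * (walshCoeff A f - M) =
      Nat.card V * (#{p ∈ A ×ˢ A | p.1 + p.2 ∈ A} : ℝ) - #A ^ 3
        - M * (Nat.card V * #A - #A ^ 2) := by
  rw [← sum_walshCoeff_cube, ← sum_walshCoeff_sq, ← add_sum_erase _ _ (mem_univ 0),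
    ← add_sum_erase univ (fun f ↦ walshCoeff A f ^ 2) (mem_univ 0), walshCoeff_zero]
  simp only [mul_sub, ← pow_succ, sum_sub_distrib, ← sum_mul]
  ring

end Fourier

section SumFree

variable [Finite V]

lemma exists_dual_card_lt_four_mul {A : Finset V} (hA : ∀ x ∈ A, ∀ y ∈ A, x + y ∉ A)
    (hcard : Nat.card V < 3 * #A) :
    ∃ f : Dual (ZMod 2) V, f ≠ 0 ∧ Nat.card V < 4 * #{x ∈ A | f x ≠ 0} := by
  classical
  have := finite_of_finite (ZMod 2) (M := Dual (ZMod 2) V)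
  let := Fintype.ofFinite (Dual (ZMod 2) V)
  by_contra! h
  have hnonneg : 0 ≤ ∑ f ∈ univ.erase (0 : Dual (ZMod 2) V),
      walshCoeff A f ^ 2 * (walshCoeff A f - (#A - Nat.card V / 2)) := by
    refine sum_nonneg fun f hf ↦ mul_nonneg (sq_nonneg _) ?_
    have : (4 * #{x ∈ A | f x ≠ 0} : ℝ) ≤ Nat.card V := mod_cast h f (ne_of_mem_erase hf)
    rw [walshCoeff_eq_card_sub]
    linarith
  have hsum : #{p ∈ A ×ˢ A | p.1 + p.2 ∈ A} = 0 := by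
    simp +contextual [filter_eq_empty_iff, hA]
  rw [sum_walshCoeff_sq_mul_sub, hsum] at hnonneg
  have hV : (0 : ℝ) < Nat.card V := mod_cast Nat.card_pos
  have hcard' : (Nat.card V : ℝ) < 3 * #A := mod_cast hcard
  have : 0 < (#A : ℝ) * Nat.card V * (3 * #A - Nat.card V) :=
    mul_pos (mul_pos (by linarith) hV) (by linarith)
  linarith

lemma exists_dual_forall_ne_zero {A : Finset V} (hA : ∀ x ∈ A, ∀ y ∈ A, x + y ∉ A)
    (hcard : Nat.card V < 3 * #A) : ∃ f : Dual (ZMod 2) V, ∀ x ∈ A, f x ≠ 0 := by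
  classical
  let := Fintype.ofFinite V
  obtain ⟨f, hf, hlt⟩ := exists_dual_card_lt_four_mul hA hcard
  refine ⟨f, fun z hz hfz ↦ ?_⟩
  have hhalf : 2 * #{x ∈ ({x | f x ≠ 0} : Finset V) | x ∈ A} ≤ #{x | f x ≠ 0} :=
    two_mul_card_filter_le_card_of_not_add (u := z) (by simp [hfz]) (· ∈ A)
      fun x _ hx ↦ hA x hx z hz
  have hswap : #{x ∈ ({x | f x ≠ 0} : Finset V) | x ∈ A} = #{x ∈ A | f x ≠ 0} :=
    congrArg card (by ext; simp [and_comm])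
  have := two_mul_card_dual_ne_zero hf
  lia

end SumFree

section PopularDifference

variable [Finite V] [DecidableEq V]

lemma card_mul_le_four_mul_card_add_notMem {B : Finset V}
    (hB : ∀ f : Dual (ZMod 2) V, f ≠ 0 → Nat.card V ≤ 8 * #{x ∈ B | f x ≠ 0}) :
    (Nat.card V - #B : ℝ) * #B ≤ 4 * #{p ∈ B ×ˢ B | p.1 + p.2 ∉ B} := by
  classical
  have := finite_of_finite (ZMod 2) (M := Dual (ZMod 2) V)
  let := Fintype.ofFinite (Dual (ZMod 2) V)
  have hnonpos : ∑ f ∈ univ.erase (0 : Dual (ZMod 2) V),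
      walshCoeff B f ^ 2 * (walshCoeff B f - (#B - Nat.card V / 4)) ≤ 0 := by
    refine sum_nonpos fun f hf ↦ mul_nonpos_of_nonneg_of_nonpos (sq_nonneg _) ?_
    have : (Nat.card V : ℝ) ≤ 8 * #{x ∈ B | f x ≠ 0} := mod_cast hB f (ne_of_mem_erase hf)
    rw [walshCoeff_eq_card_sub]
    linarith
  have hV : (0 : ℝ) < Nat.card V := mod_cast Nat.card_pos
  have hpairs : (#{p ∈ B ×ˢ B | p.1 + p.2 ∈ B} + #{p ∈ B ×ˢ B | p.1 + p.2 ∉ B} : ℝ) = #B * #B :=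
    mod_cast (card_filter_add_card_filter_not _).trans (card_product B B)
  rw [sum_walshCoeff_sq_mul_sub] at hnonpos
  refine le_of_mul_le_mul_left ?_ hV
  linear_combination 4 * hnonpos - 4 * (Nat.card V : ℝ) * hpairs

lemma exists_notMem_card_le_four_mul {B : Finset V} (hBV : #B < Nat.card V)
    (hB : ∀ f : Dual (ZMod 2) V, f ≠ 0 → Nat.card V ≤ 8 * #{x ∈ B | f x ≠ 0}) :
    ∃ u ∉ B, #B ≤ 4 * #{p ∈ B ×ˢ B | p.1 + p.2 = u} := by
  let := Fintype.ofFinite V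
  have hcompl : (#Bᶜ : ℝ) = Nat.card V - #B := by
    rw [card_compl, Nat.card_eq_fintype_card, Nat.cast_sub (card_le_univ B)]
  have hmaps : ∀ p ∈ ({p ∈ B ×ˢ B | p.1 + p.2 ∉ B} : Finset (V × V)), p.1 + p.2 ∈ Bᶜ := by
    simp only [mem_filter, mem_compl]
    tauto
  have hne : Bᶜ.Nonempty := by
    rw [← card_pos, card_compl, ← Nat.card_eq_fintype_card]
    lia
  have hpigeon : #Bᶜ • (#B / 4 : ℝ) ≤ #{p ∈ B ×ˢ B | p.1 + p.2 ∉ B} := by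
    have := card_mul_le_four_mul_card_add_notMem hB
    rw [nsmul_eq_mul, hcompl]
    linarith
  obtain ⟨u, hu, hle⟩ := exists_le_card_fiber_of_nsmul_le_card_of_maps_to hmaps hne hpigeon
  refine ⟨u, mem_compl.1 hu, ?_⟩
  have hfiber : #{p ∈ ({p ∈ B ×ˢ B | p.1 + p.2 ∉ B} : Finset (V × V)) | p.1 + p.2 = u} ≤
      #{p ∈ B ×ˢ B | p.1 + p.2 = u} := card_le_card <| filter_subset_filter _ <| filter_subset _ _
  rify at hfiber ⊢
  linarith

end PopularDifference

section BlockingSets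

/-- `B` is `n`-blocking if it meets every `n`-dimensional subspace in a nonzero vector, i.e. if no
`PG(n - 1, 2)` lies in the complement of `B`. -/
def IsBlockingSet (B : Set V) (n : ℕ) : Prop :=
  ∀ W : Submodule (ZMod 2) V, finrank (ZMod 2) W = n → ∃ x ∈ W, x ≠ 0 ∧ x ∈ B

variable [Finite V]

namespace IsBlockingSet

lemma exists_add_mem {B : Set V} {n : ℕ} (hB : IsBlockingSet B (n + 1)) (h0 : 0 ∈ B)
    {W : Submodule (ZMod 2) V} (hW : finrank (ZMod 2) W = n) (hWB : ∀ w ∈ W, w ∈ B → w = 0)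
    (x : V) : ∃ w ∈ W, w + x ∈ B := by
  by_cases hx : x ∈ W
  · exact ⟨x, hx, by simpa [ZModModule.add_self] using h0⟩
  obtain ⟨y, hy, hy0, hyB⟩ := hB (W ⊔ span (ZMod 2) {x}) (by rw [finrank_sup_span_singleton hx, hW])
  obtain ⟨w, hw, z, hz, rfl⟩ := mem_sup.1 hy
  obtain rfl | rfl := mem_span_singleton_iff_eq_zero_or_eq.1 hz
  · simp only [add_zero] at hyB hy0
    exact absurd (hWB w hw hyB) hy0
  · exact ⟨w, hw, hyB⟩

lemma add_mem {B : Set V} (hB : IsBlockingSet B 2) (h0 : 0 ∈ B) {x y : V} (hx : x ∉ B)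
    (hy : y ∉ B) : x + y ∈ B := by
  have hx0 : x ≠ 0 := fun h ↦ hx (h ▸ h0)
  obtain ⟨w, hw, hwy⟩ := hB.exists_add_mem h0 (finrank_span_singleton hx0)
    (fun w hw hwB ↦ (mem_span_singleton_iff_eq_zero_or_eq.1 hw).resolve_right
      fun h ↦ hx (h ▸ hwB)) y
  obtain rfl | rfl := mem_span_singleton_iff_eq_zero_or_eq.1 hw
  · exact absurd (by simpa using hwy) hy
  · exact hwy

lemma preimage_ker {B : Finset V} {n : ℕ} (hB : IsBlockingSet (B : Set V) (n + 1))
    (h0 : 0 ∈ B) {f : Dual (ZMod 2) V} (hf : f ≠ 0)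
    (hcard : 2 ^ (n + 1) * #{x ∈ B | f x ≠ 0} < Nat.card V) :
    IsBlockingSet ((↑) ⁻¹' (B : Set V) : Set (LinearMap.ker f)) n := by
  classical
  let := Fintype.ofFinite V
  intro W hW
  by_contra! hWB
  have hcover : ({x | f x ≠ 0} : Finset V) ⊆
      image (fun p : W × V ↦ (p.1 : V) + p.2) (univ ×ˢ {x ∈ B | f x ≠ 0}) := by
    intro x hx
    obtain ⟨w, hw, hwx⟩ := hB.exists_add_mem h0
      ((finrank_map_subtype_eq (LinearMap.ker f) W).trans hW)
      (by simpa [Subtype.ext_iff] using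
        fun w hwf hw hwB ↦ by_contra fun hw0 ↦ hWB ⟨w, hwf⟩ hw hw0 hwB) x
    obtain ⟨w, hwW, rfl⟩ := mem_map.1 hw
    refine mem_image.2 ⟨(⟨w, hwW⟩, w + x), ?_, by simp [← add_assoc, ZModModule.add_self]⟩
    simp_all
  have hWcard : Fintype.card W = 2 ^ n := by
    rw [← Nat.card_eq_fintype_card, natCard_eq_pow_finrank (K := ZMod 2), hW, Nat.card_zmod]
  have hle := (card_le_card hcover).trans card_image_le
  rw [card_product, card_univ, hWcard] at hle
  have := two_mul_card_dual_ne_zero hf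
  rw [pow_succ] at hcard
  lia

lemma image_mkQ {B : Set V} {n : ℕ} (hB : IsBlockingSet B (n + 1)) (h0 : 0 ∈ B) {u : V}
    (hu : u ∉ B) : IsBlockingSet ((span (ZMod 2) {u}).mkQ '' B) n := by
  intro W hW
  have hu0 : u ≠ 0 := fun h ↦ hu (h ▸ h0)
  obtain ⟨x, hxW, hx0, hxB⟩ := hB (W.comap (span (ZMod 2) {u}).mkQ)
    (by rw [finrank_comap_mkQ, hW, finrank_span_singleton hu0])
  refine ⟨_, hxW, ?_, Set.mem_image_of_mem _ hxB⟩
  rw [mkQ_apply, Ne, Quotient.mk_eq_zero, mem_span_singleton_iff_eq_zero_or_eq]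
  rintro (rfl | rfl)
  exacts [hx0 rfl, hu hxB]

end IsBlockingSet

lemma IsBlockingSet.exists_dual_mem_of_eq_zero {B : Finset V} (hB : IsBlockingSet (B : Set V) 2)
    (h0 : 0 ∈ B) (hcard : 3 * #B < 2 * Nat.card V) :
    ∃ f : Dual (ZMod 2) V, f ≠ 0 ∧ ∀ x, f x = 0 → x ∈ B := by
  classical
  let := Fintype.ofFinite V
  have hcompl : #B + #Bᶜ = Nat.card V := by
    rw [card_add_card_compl, Nat.card_eq_fintype_card]
  obtain ⟨f, hf⟩ := exists_dual_forall_ne_zero (A := Bᶜ)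
    (fun x hx y hy ↦ by
      simpa using hB.add_mem h0 (x := x) (y := y) (by simpa using hx) (by simpa using hy))
    (by lia)
  refine ⟨f, ?_, fun x hx ↦ by_contra fun hxB ↦ hf x (mem_compl.2 hxB) hx⟩
  rintro rfl
  obtain ⟨x, hx⟩ : Bᶜ.Nonempty := card_pos.1 (by lia)
  exact hf x hx rfl

lemma card_le_four_mul_card_dual_eq_zero {B : Finset V} {f : Dual (ZMod 2) V} (hf : f ≠ 0)
    (hB : ∀ x y, f x = 0 → f y = 0 → x ∉ B → y ∉ B → x + y ∈ B) :
    Nat.card V ≤ 4 * #{x ∈ B | f x = 0} := by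
  classical
  let := Fintype.ofFinite V
  have hker := two_mul_card_dual_eq_zero hf
  have hsplit := card_filter_add_card_filter_not (s := ({x | f x = 0} : Finset V)) (· ∈ B)
  have hswap : #{x ∈ ({x | f x = 0} : Finset V) | x ∈ B} = #{x ∈ B | f x = 0} :=
    congrArg card (by ext; simp [and_comm])
  by_cases hu : ∃ u, f u = 0 ∧ u ∉ B
  · obtain ⟨u, hfu, huB⟩ := hu
    have hhalf : 2 * #{x ∈ ({x | f x = 0} : Finset V) | x ∉ B} ≤ #{x | f x = 0} :=
      two_mul_card_filter_le_card_of_not_add (u := u) (by simp [hfu]) (· ∉ B)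
        fun x hx hxB ↦ not_not.2 (hB x u (by simpa using hx) hfu hxB huB)
    lia
  · have hempty : #{x ∈ ({x | f x = 0} : Finset V) | x ∉ B} = 0 := by
      simpa [filter_eq_empty_iff] using hu
    lia

lemma IsBlockingSet.exists_dual_card_le_four_mul {B : Finset V} (hB : IsBlockingSet (B : Set V) 3)
    (h0 : 0 ∈ B) (hcard : 8 * #B < 3 * Nat.card V) :
    ∃ f : Dual (ZMod 2) V, f ≠ 0 ∧ Nat.card V ≤ 4 * #{x ∈ B | f x = 0} := by
  classical
  by_cases hsparse : ∃ f : Dual (ZMod 2) V, f ≠ 0 ∧ 8 * #{x ∈ B | f x ≠ 0} < Nat.card V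
  · obtain ⟨f, hf, hlt⟩ := hsparse
    refine ⟨f, hf, card_le_four_mul_card_dual_eq_zero hf fun x y hx hy hxB hyB ↦ ?_⟩
    exact (hB.preimage_ker h0 hf hlt).add_mem (x := ⟨x, hx⟩) (y := ⟨y, hy⟩) h0 hxB hyB
  push Not at hsparse
  obtain ⟨u, hu, hpop⟩ := exists_notMem_card_le_four_mul (by lia) hsparse
  have hu0 : u ≠ 0 := fun h ↦ hu (h ▸ h0)
  refine exists_dual_card_le_of_quotient (m := 2) hu0 ?_
  have := Finite.of_surjective _ (span (ZMod 2) {u}).mkQ_surjective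
  let := Fintype.ofFinite (V ⧸ span (ZMod 2) {u})
  have hV := two_mul_natCard_quotient_span_singleton hu0
  have himage := two_mul_card_image_mkQ_add_card_le hu0 B
  -- The image has at most `7 / 8 * #B` elements, hence density below `7 / 4 * 3 / 8 < 2 / 3`.
  obtain ⟨f, hf, hker⟩ := IsBlockingSet.exists_dual_mem_of_eq_zero
    (B := B.image (span (ZMod 2) {u}).mkQ) (by simpa using hB.image_mkQ h0 hu)
    (mem_image.2 ⟨0, h0, map_zero _⟩) (by lia)
  refine ⟨f, hf, ?_⟩
  rw [← two_mul_card_dual_eq_zero hf]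
  exact Nat.mul_le_mul_left 2 <| card_le_card fun y hy ↦
    mem_filter.2 ⟨hker y (mem_filter.1 hy).2, (mem_filter.1 hy).2⟩

lemma IsBlockingSet.exists_dual_card_le_two_pow_mul {n : ℕ} {B : Finset V}
    (hB : IsBlockingSet (B : Set V) (n + 3)) (h0 : 0 ∈ B)
    (hcard : 2 ^ (n + 3) * #B < 3 * Nat.card V) :
    ∃ f : Dual (ZMod 2) V, f ≠ 0 ∧ Nat.card V ≤ 2 ^ (n + 2) * #{x ∈ B | f x = 0} := by
  classical
  induction n generalizing V with
  | zero => exact hB.exists_dual_card_le_four_mul h0 hcard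
  | succ n ih =>
    let := Fintype.ofFinite V
    have hpow : 2 ^ 3 * #B ≤ 2 ^ (n + 1 + 3) * #B :=
      Nat.mul_le_mul_right _ (Nat.pow_le_pow_right two_pos (by lia))
    obtain ⟨u, hu⟩ : ∃ u, u ∉ B := by
      refine (exists_mem_notMem_of_card_lt_card (s := B) (t := univ) ?_).imp fun _ ↦ And.right
      rw [card_univ, ← Nat.card_eq_fintype_card]
      lia
    have hu0 : u ≠ 0 := fun h ↦ hu (h ▸ h0)
    have hV := two_mul_natCard_quotient_span_singleton hu0
    have himage : 2 ^ (n + 3) * #(B.image (span (ZMod 2) {u}).mkQ) ≤ 2 ^ (n + 3) * #B :=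
      Nat.mul_le_mul_left _ card_image_le
    have hquot := ih (B := B.image (span (ZMod 2) {u}).mkQ) (by simpa using hB.image_mkQ h0 hu)
      (mem_image.2 ⟨0, h0, map_zero _⟩) (by rw [Nat.add_right_comm, pow_succ] at hcard; lia)
    obtain ⟨f, hf, hle⟩ := exists_dual_card_le_of_quotient hu0 hquot
    exact ⟨f, hf, hle.trans_eq (by ring)⟩

lemma IsBlockingSet.exists_submodule_add_mem {n : ℕ} {B : Finset V}
    (hB : IsBlockingSet (B : Set V) (n + 2)) (h0 : 0 ∈ B)
    (hcard : 2 ^ (n + 2) * #B < 3 * Nat.card V) :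
    ∃ K : Submodule (ZMod 2) V, finrank (ZMod 2) K + n = finrank (ZMod 2) V ∧
      ∀ x ∈ K, ∀ y ∈ K, x ∉ B → y ∉ B → x + y ∈ B := by
  induction n generalizing V with
  | zero => exact ⟨⊤, by simp, fun x _ y _ hx hy ↦ hB.add_mem h0 hx hy⟩
  | succ n ih =>
    obtain ⟨f, hf, hdense⟩ := hB.exists_dual_card_le_two_pow_mul h0 hcard
    have hsplit := card_filter_add_card_filter_not (s := B) (f · = 0)
    have hker := Dual.finrank_ker_add_one_of_ne_zero hf
    have hsparse : 2 ^ (n + 3) * #{x ∈ B | f x ≠ 0} < Nat.card V := by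
      rw [← hsplit, pow_succ 2 (n + 2)] at hcard
      rw [pow_succ 2 (n + 2)]
      linarith
    classical
    have hpreimage : 2 ^ (n + 2) *
        #(B.preimage ((↑) : LinearMap.ker f → V) Subtype.val_injective.injOn) ≤
          2 ^ (n + 2) * #B := by
      rw [card_preimage]
      exact Nat.mul_le_mul_left _ (card_filter_le _ _)
    have hker_card := two_mul_natCard_ker hf
    obtain ⟨K, hK, hKB⟩ := ih
      (B := B.preimage ((↑) : LinearMap.ker f → V) Subtype.val_injective.injOn)
      (by simpa using hB.preimage_ker h0 hf hsparse)
      (mem_preimage.2 h0) (by rw [pow_succ 2 (n + 2)] at hcard; lia)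
    refine ⟨K.map (LinearMap.ker f).subtype, ?_, ?_⟩
    · rw [finrank_map_subtype_eq]
      lia
    · rintro _ ⟨x, hx, rfl⟩ _ ⟨y, hy, rfl⟩ hxB hyB
      simpa using hKB x hx y hy (by simpa using hxB) (by simpa using hyB)

end BlockingSets

end BinaryGeometry

theorem stmt_15_general {V : Type*} [AddCommGroup V] [Module (ZMod 2) V] [Finite V] {n : ℕ}
    (hn : 2 ≤ n) {E : Set V} (h0 : (0 : V) ∉ E)
    (hfree : ¬ ∃ W : Submodule (ZMod 2) V, Module.finrank (ZMod 2) W = n ∧ ∀ x ∈ W, x ≠ 0 → x ∈ E)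
    (hcard : (1 - 3 / 2 ^ n : ℝ) * Nat.card V < E.ncard) :
    ∃ K : Submodule (ZMod 2) V, Module.finrank (ZMod 2) K + n = Module.finrank (ZMod 2) V + 2 ∧
      (∀ x ∈ E ∩ K, ∀ y ∈ E ∩ K, x + y ∉ E) ∧
      (1 / 4 : ℝ) * Nat.card K < (E ∩ (K : Set V)).ncard := by
  obtain ⟨n, rfl⟩ := Nat.exists_eq_add_of_le' hn
  have hsmall := BinaryGeometry.two_pow_mul_ncard_compl_lt hcard
  have hblock : BinaryGeometry.IsBlockingSet Eᶜ (n + 2) := by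
    push Not at hfree
    exact hfree
  obtain ⟨K, hK, hfreeK⟩ := BinaryGeometry.IsBlockingSet.exists_submodule_add_mem
    (B := Eᶜ.toFinite.toFinset) (by simpa using hblock) (by simpa using h0)
    (by rwa [← Set.ncard_eq_toFinset_card])
  refine ⟨K, by lia, fun x hx y hy ↦ ?_, ?_⟩
  · simpa using hfreeK x hx.2 y hy.2 (by simpa using hx.1) (by simpa using hy.1)
  have hpow : 2 ^ (n + 2) * Nat.card K = 4 * Nat.card V := by
    rw [Module.natCard_eq_pow_finrank (K := ZMod 2) (V := V),
      Module.natCard_eq_pow_finrank (K := ZMod 2) (V := K), ← hK, Nat.card_zmod]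
    ring
  have hle : 2 ^ (n + 2) * Nat.card K ≤
      2 ^ (n + 2) * ((E ∩ (K : Set V)).ncard + Eᶜ.ncard) := Nat.mul_le_mul_left _ <|
    (Nat.card_coe_set_eq (K : Set V)).trans_le
      (BinaryGeometry.ncard_le_ncard_inter_add_ncard_compl E K)
  have hlt : Nat.card K < 4 * (E ∩ (K : Set V)).ncard := by
    refine lt_of_mul_lt_mul_left ?_ (2 ^ (n + 2)).zero_le
    linarith
  rify at hlt
  linarith

theorem stmt_15 (r n : ℕ) (hn : 2 ≤ n) (hr : n ≤ r)
    (E : Set (Fin r → ZMod 2)) (h0 : (0 : Fin r → ZMod 2) ∉ E)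
    (hfree : ¬ ∃ W : Submodule (ZMod 2) (Fin r → ZMod 2),
      Module.finrank (ZMod 2) W = n ∧ ∀ x ∈ W, x ≠ 0 → x ∈ E)
    (hcard : (1 - 3 / 2^n : ℝ) * 2^r < (E.ncard : ℝ)) :
    ∃ K : Submodule (ZMod 2) (Fin r → ZMod 2),
      Module.finrank (ZMod 2) K = r - n + 2 ∧
      (¬ ∃ x y, x ∈ E ∩ (K : Set (Fin r → ZMod 2)) ∧
        y ∈ E ∩ (K : Set (Fin r → ZMod 2)) ∧ x ≠ y ∧
        x + y ∈ E ∩ (K : Set (Fin r → ZMod 2))) ∧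
      (1/4 : ℝ) * 2^(r - n + 2) < ((E ∩ (K : Set (Fin r → ZMod 2))).ncard : ℝ) := by
  obtain ⟨K, hK, htri, hdense⟩ := stmt_15_general hn h0 hfree (by simpa using hcard)
  have hdim : Module.finrank (ZMod 2) K = r - n + 2 := by
    rw [Module.finrank_fin_fun] at hK
    lia
  refine ⟨K, hdim, fun ⟨x, y, hx, hy, _, hxy⟩ ↦ htri x hx y hy hxy.1, ?_⟩
  simpa [Module.natCard_eq_pow_finrank (K := ZMod 2), hdim] using hdense
end
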